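/- Fix d ≥ 1, an integer L ≥ 2, β > 1, integers k > ℓ ≥ 1 with γ = 2^{−k} and δ = ℓ/k, and an integer 0 ≤ N_p ≤ 2^{dk}L^d; set m = 2N_p/(2^{dk}L^d) − 1. Let σ* : T_L → [−1,1] be measurable with L^{−d}∫_{T_L}σ*(r)dr = m, F(σ*) = inf{ F(σ) : σ : T_L → [−1,1] measurable, L^{−d}∫_{T_L}σ(r)dr = m }, and assume σ* is Lipschitz with Lipschitz constant Λ. Then there is a constant c > 0, depending only on d, β, J and Λ, such that for every nonempty family 𝒜 of coarse-grained configurations σ_δ ∈ Ω^{(δ)}_{L,γ} with L^{−d}∫_{T_L}σ_δ(r)dr = m, | γ^d · log P_{can,N_p}( ∪_{σ_δ∈𝒜} E(σ_δ) ) + inf_{σ ∈ 𝒜} β ( F(σ) − F(σ*) ) | ≤ c · L^d (γ^δ + γ^{d(1−δ)}) log(1/γ). -/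

import Mathlib

open MeasureTheory Real

/-- The `d`-dimensional torus `(ℝ/Lℤ)^d` with its Lebesgue (Haar) measure. -/
abbrev Torus (d L : ℕ) := Fin d → AddCircle (L : ℝ)

/-- Geodesic (Euclidean) distance on the torus. -/
noncomputable def torusDist {d L : ℕ} (x y : Torus d L) : ℝ :=
  Real.sqrt (∑ i, (dist (x i) (y i)) ^ 2)

/-- The entropy function `i`. (`Real.log 0 = 0` gives the convention `0 · log 0 = 0`.) -/
noncomputable def ient (m : ℝ) : ℝ :=
  (1 - m) / 2 * Real.log ((1 - m) / 2) + (1 + m) / 2 * Real.log ((1 + m) / 2)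

/-- The hypotheses on the Kac interaction potential `J : [0,∞) → ℝ`: nonnegative, bounded,
continuous, supported in `[0,1]`, smooth and strictly decreasing on `[0,1]`, and normalized
so that `∫_{ℝ^d} J(|r|) dr = 1`. -/
structure KacPotential (d : ℕ) (J : ℝ → ℝ) : Prop where
  nonneg : ∀ r, 0 ≤ J r
  bounded : ∃ M, ∀ r, |J r| ≤ M
  continuous : Continuous J
  support : ∀ r, 1 < r → J r = 0
  strictAnti : StrictAntiOn J (Set.Icc 0 1)
  smooth : ContDiffOn ℝ (⊤ : ℕ∞) J (Set.Icc 0 1)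
  normalized : (∫ r : EuclideanSpace ℝ (Fin d), J ‖r‖) = 1

/-- The Gates–Penrose–Lebowitz free energy functional
`F(σ) = (1/β)∫ i(σ(x)) dx − (1/2)∫∫ J(|x−y|) σ(x) σ(y) dx dy`. -/
noncomputable def GPL (d L : ℕ) [Fact ((0:ℝ) < L)] (β : ℝ) (J : ℝ → ℝ)
    (σ : Torus d L → ℝ) : ℝ :=
  (1 / β) * (∫ x, ient (σ x))
    - (1 / 2) * ∫ x, ∫ y, J (torusDist x y) * σ x * σ y

open scoped Classical

/-- The representative coordinate in `[0, L)` of a point of the circle `ℝ/Lℤ`. -/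
noncomputable def torusCoord {L : ℕ} [Fact ((0:ℝ) < L)] (x : AddCircle (L:ℝ)) : ℝ :=
  ((AddCircle.equivIco (L:ℝ) 0) x).1

/-- Index of the dyadic cube of side `2^{-n}` (from the partition `Q^{(n)}`) containing `x`. -/
noncomputable def cubeIdx {d : ℕ} (L : ℕ) [Fact ((0:ℝ) < L)] (n : ℕ) (x : Torus d L) :
    Fin d → ℤ := fun i => ⌊torusCoord (x i) * 2 ^ n⌋

/-- The cube of the partition `Q^{(n)}` containing `x`. -/
noncomputable def cubeOf {d : ℕ} (L : ℕ) [Fact ((0:ℝ) < L)] (n : ℕ) (x : Torus d L) :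
    Set (Torus d L) := {y | cubeIdx L n y = cubeIdx L n x}

/-- Coarse graining `π^{(δ)}`: averaging over the cubes of side `2^{-n}` of `Q^{(n)}`. -/
noncomputable def coarse {d : ℕ} (L : ℕ) [Fact ((0:ℝ) < L)] (n : ℕ)
    (f : Torus d L → ℝ) : Torus d L → ℝ :=
  fun x => (∫ y in cubeOf L n x, f y) / (volume (cubeOf L n x)).toReal

/-- The microscopic lattice sites, indexing `γℤ^d ∩ T_L` with `γ = 2^{-k}`. -/
abbrev Site (d L k : ℕ) := Fin d → Fin (2 ^ k * L)

/-- Microscopic spin configurations (`true` = occupied, i.e. spin `+1`). -/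
abbrev ConfigSpace (d L k : ℕ) := Site d L k → Bool

/-- The spin value (`±1`) of a site. -/
def spin (b : Bool) : ℝ := if b then 1 else -1

/-- The position in the torus of a lattice site. -/
noncomputable def sitePos {d : ℕ} (L k : ℕ) (p : Site d L k) : Torus d L :=
  fun i => (((p i : ℝ) * (2:ℝ) ^ (-(k:ℤ)) : ℝ) : AddCircle (L:ℝ))

/-- The lattice site whose fine cube (of side `2^{-k}`) contains the point `x` of the torus. -/
noncomputable def siteOf {d : ℕ} (L k : ℕ) [Fact ((0:ℝ) < L)] (x : Torus d L) : Site d L k :=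
  fun i => ⟨(⌊torusCoord (x i) * 2 ^ k⌋).toNat % (2 ^ k * L),
    Nat.mod_lt _ (Nat.mul_pos (pow_pos (by norm_num) k)
      (by have h := (Fact.out : (0:ℝ) < L); exact_mod_cast h))⟩

/-- A microscopic configuration viewed as a `±1`-valued step function on the torus,
constant on each cube of the fine partition `Q^{(k)}`. -/
noncomputable def stepFun {d : ℕ} (L k : ℕ) [Fact ((0:ℝ) < L)]
    (s : ConfigSpace d L k) : Torus d L → ℝ :=
  fun x => spin (s (siteOf L k x))

/-- `γ = 2^{-k}`, the Kac scaling parameter. -/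
noncomputable def gam (k : ℕ) : ℝ := (2:ℝ) ^ (-(k:ℤ))

/-- The Kac Hamiltonian `H_{γ,L}(s) = -(γ^d/2) ∑_{x,y ∈ Λ_{L,γ}} J(|x-y|) s(x) s(y)`. -/
noncomputable def Ham {d : ℕ} (L k : ℕ) (J : ℝ → ℝ) (s : ConfigSpace d L k) : ℝ :=
  -((gam k) ^ d / 2) * ∑ p : Site d L k, ∑ q : Site d L k,
      J (torusDist (sitePos L k p) (sitePos L k q)) * spin (s p) * spin (s q)

/-- The number of occupied sites (sites with spin `+1`) of a configuration. -/
def numOnes {d : ℕ} (L k : ℕ) (s : ConfigSpace d L k) : ℕ :=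
  (Finset.univ.filter fun p => s p = true).card

/-- The canonical Gibbs probability, at inverse temperature `β` and particle number `Np`,
of an event `A` (as an event in `Ω_{L,γ,Np}`). -/
noncomputable def Pcan {d : ℕ} (L k : ℕ) (β : ℝ) (J : ℝ → ℝ) (Np : ℕ)
    (A : Set (ConfigSpace d L k)) : ℝ :=
  (∑ s ∈ Finset.univ.filter
      (fun s : ConfigSpace d L k => s ∈ A ∧ numOnes L k s = Np),
      Real.exp (-β * Ham L k J s)) /
  (∑ s ∈ Finset.univ.filter (fun s : ConfigSpace d L k => numOnes L k s = Np),
      Real.exp (-β * Ham L k J s))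

/-- The lift of a function on the torus to a (periodic) function on `ℝ^d`. -/
noncomputable def liftTorus {d L : ℕ} (φ : Torus d L → ℝ) : EuclideanSpace ℝ (Fin d) → ℝ :=
  fun v => φ (fun i => ((v i : ℝ) : AddCircle (L:ℝ)))

/-!
Fix the scale `2^{-ℓ}`. Since `J` is Lipschitz, `γ^d H` is, up to `O(L^d γ^δ)`, a function of the
coarse-grained configuration, that is, of the occupation numbers of the cubes of side `2^{-ℓ}`.
By Stirling's formula the number of configurations with given occupation numbers is, up to
`O(L^d γ^{d(1-δ)} log(1/γ))` in `γ^d log`, the exponential of the entropy of the coarse-grained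
configuration. Hence `γ^d log` of the Gibbs weight of each `E(σ_δ)` is `-β F(σ_δ)` up to the
admissible error. There are only `(n+1)^{L^d 2^{dℓ}}` occupation profiles, with
`n = 2^{d(k-ℓ)}` sites per cube, so summing over a family costs no more than an error of the same
order and replaces `F` by its infimum over the family.

For the partition function this infimum is compared with `F(σ*)`. It is at least `F(σ*)` because
coarse-grained configurations compete in the variational problem. Conversely, averaging `σ*` over
the cubes lowers the entropy term by convexity of `i` and barely changes the energy; rounding the
occupation numbers of the average to integers with the right sum then changes each by at most `1`.
-/

section Cells

variable {d L : ℕ}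

lemma gam_pos (k : ℕ) : 0 < gam k := by
  unfold gam; positivity

lemma gam_eq_inv (k : ℕ) : gam k = (2 ^ k)⁻¹ := by
  rw [gam, zpow_neg, zpow_natCast]

lemma gam_mul_two_pow (k : ℕ) : gam k * 2 ^ k = 1 := by
  rw [gam_eq_inv, inv_mul_cancel₀ (by positivity)]

lemma gam_eq_gam_mul_two_pow {k ℓ : ℕ} (h : ℓ ≤ k) : gam ℓ = gam k * 2 ^ (k - ℓ) := by
  refine mul_right_cancel₀ (pow_ne_zero ℓ (two_ne_zero (α := ℝ))) ?_
  rw [gam_mul_two_pow, mul_assoc, ← pow_add, Nat.sub_add_cancel h, gam_mul_two_pow]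

lemma gam_antitone : Antitone gam := fun ℓ k h => by
  rw [gam_eq_gam_mul_two_pow h]
  exact le_mul_of_one_le_right (gam_pos k).le (one_le_pow₀ one_le_two)

lemma gam_le_one (k : ℕ) : gam k ≤ 1 :=
  (gam_antitone k.zero_le).trans_eq (by simp [gam])

lemma torusDist_eq_dist (x y : Torus d L) : torusDist x y =
    dist (WithLp.toLp 2 x : PiLp 2 fun _ : Fin d => AddCircle (L : ℝ)) (WithLp.toLp 2 y) :=
  (PiLp.dist_eq_of_L2 _ _).symm

lemma torusDist_nonneg (x y : Torus d L) : 0 ≤ torusDist x y := Real.sqrt_nonneg _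

lemma continuous_torusDist : Continuous fun z : Torus d L × Torus d L => torusDist z.1 z.2 := by
  unfold torusDist
  fun_prop

lemma abs_torusDist_sub_torusDist_le (x y x' y' : Torus d L) :
    |torusDist x y - torusDist x' y'| ≤ torusDist x x' + torusDist y y' := by
  simpa only [torusDist_eq_dist, ← Real.dist_eq] using dist_dist_dist_le _ _ _ _

lemma dist_le_torusDist (x y : Torus d L) : dist x y ≤ torusDist x y := by
  refine (dist_pi_le_iff (Real.sqrt_nonneg _)).2 fun i => ?_
  refine Real.le_sqrt_of_sq_le ?_
  exact Finset.single_le_sum (f := fun i => dist (x i) (y i) ^ 2)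
    (fun _ _ => sq_nonneg _) (Finset.mem_univ i)

variable [Fact ((0 : ℝ) < L)]

lemma torusCoord_nonneg (x : AddCircle (L : ℝ)) : 0 ≤ torusCoord x :=
  ((AddCircle.equivIco (L : ℝ) 0) x).2.1

lemma torusCoord_lt (x : AddCircle (L : ℝ)) : torusCoord x < L := by
  simpa [torusCoord] using ((AddCircle.equivIco (L : ℝ) 0) x).2.2

lemma coe_torusCoord (x : AddCircle (L : ℝ)) : (torusCoord x : AddCircle (L : ℝ)) = x :=
  AddCircle.coe_equivIco

lemma torusCoord_coe {r : ℝ} (hr : r ∈ Set.Ico (0 : ℝ) L) :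
    torusCoord (r : AddCircle (L : ℝ)) = r :=
  AddCircle.equivIco_coe_of_mem (p := (L : ℝ)) (a := 0) (by simpa using hr)

lemma measurable_torusCoord : Measurable (torusCoord : AddCircle (L : ℝ) → ℝ) :=
  measurable_subtype_coe.comp (AddCircle.measurableEquivIco (L : ℝ) 0).measurable

lemma measurePreserving_torusCoord :
    MeasurePreserving (torusCoord : AddCircle (L : ℝ) → ℝ) volume
      (volume.restrict (Set.Ico 0 L)) := by
  refine ⟨measurable_torusCoord, ?_⟩
  have hmk := AddCircle.measurePreserving_mk (L : ℝ) 0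
  rw [zero_add, ← Measure.restrict_congr_set Ico_ae_eq_Ioc] at hmk
  rw [← hmk.map_eq, Measure.map_map measurable_torusCoord hmk.measurable]
  have hid : torusCoord ∘ QuotientAddGroup.mk =ᵐ[volume.restrict (Set.Ico 0 (L : ℝ))] id :=
    (ae_restrict_iff' measurableSet_Ico).2 (.of_forall fun r hr => torusCoord_coe hr)
  rw [Measure.map_congr hid, Measure.map_id]

lemma coe_siteOf_apply (n : ℕ) (x : Torus d L) (i : Fin d) :
    ((siteOf L n x i : ℕ) : ℤ) = ⌊torusCoord (x i) * 2 ^ n⌋ := by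
  have hnonneg : 0 ≤ ⌊torusCoord (x i) * 2 ^ n⌋ :=
    Int.floor_nonneg.2 (mul_nonneg (torusCoord_nonneg _) (by positivity))
  have hlt : ⌊torusCoord (x i) * 2 ^ n⌋ < ((2 ^ n * L : ℕ) : ℤ) := by
    rw [Int.floor_lt, mul_comm]
    push_cast
    exact mul_lt_mul_of_pos_left (torusCoord_lt _) (by positivity)
  simp only [siteOf]
  rw [Nat.mod_eq_of_lt (by lia)]
  lia

lemma siteOf_eq_iff {n : ℕ} {x : Torus d L} {p : Site d L n} :
    siteOf L n x = p ↔ ∀ i, ⌊torusCoord (x i) * 2 ^ n⌋ = ((p i : ℕ) : ℤ) := by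
  simp only [funext_iff, Fin.ext_iff, ← coe_siteOf_apply, Nat.cast_inj]

lemma measurable_siteOf (n : ℕ) : Measurable (siteOf (d := d) L n) :=
  measurable_to_countable' fun p => by
    have hpre : siteOf L n ⁻¹' {p} =
        ⋂ i, {x : Torus d L | ⌊torusCoord (x i) * 2 ^ n⌋ = ((p i : ℕ) : ℤ)} := by
      ext x; simp [siteOf_eq_iff]
    rw [hpre]
    refine MeasurableSet.iInter fun i => measurableSet_eq_fun ?_ measurable_const
    exact Int.measurable_floor.comp
      ((measurable_torusCoord.comp (measurable_pi_apply i)).mul_const _)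

/-- The dyadic cube of side `2^{-n}` whose lower corner is the site `p`. -/
def cell (n : ℕ) (p : Site d L n) : Set (Torus d L) := {x | siteOf L n x = p}

lemma cubeOf_eq_cell (n : ℕ) (x : Torus d L) : cubeOf L n x = cell n (siteOf L n x) := by
  ext y
  simp only [cubeOf, cell, Set.mem_ofPred_eq, siteOf_eq_iff (p := siteOf L n x), coe_siteOf_apply,
    funext_iff, cubeIdx]

lemma measurableSet_cell (n : ℕ) (p : Site d L n) : MeasurableSet (cell n p) :=
  measurable_siteOf n (measurableSet_singleton p)

lemma volume_torusCoord_preimage_Ico {a b : ℝ} (ha : 0 ≤ a) (hb : b ≤ L) :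
    volume (torusCoord (L := L) ⁻¹' Set.Ico a b) = ENNReal.ofReal (b - a) := by
  rw [measurePreserving_torusCoord.measure_preimage measurableSet_Ico.nullMeasurableSet,
    Measure.restrict_apply measurableSet_Ico,
    Set.inter_eq_left.2 (Set.Ico_subset_Ico ha hb), Real.volume_Ico]

lemma volume_real_cell (n : ℕ) (p : Site d L n) : volume.real (cell n p) = gam n ^ d := by
  have htwo : (0 : ℝ) < 2 ^ n := by positivity
  have hcell : cell n p = Set.pi Set.univ fun i =>
      torusCoord ⁻¹' Set.Ico ((p i : ℝ) * gam n) (((p i : ℝ) + 1) * gam n) := by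
    ext x
    simp only [cell, Set.mem_ofPred_eq, siteOf_eq_iff, Set.mem_pi, Set.mem_univ, true_imp_iff,
      Set.mem_preimage, Set.mem_Ico, Int.floor_eq_iff, Int.cast_natCast]
    simp only [gam_eq_inv, mul_inv_le_iff₀ htwo, lt_mul_inv_iff₀ htwo]
  have hside (i : Fin d) : volume (torusCoord (L := L) ⁻¹'
      Set.Ico ((p i : ℝ) * gam n) (((p i : ℝ) + 1) * gam n)) = ENNReal.ofReal (gam n) := by
    have hlast : (p i : ℝ) + 1 ≤ 2 ^ n * L := mod_cast (p i).2
    rw [volume_torusCoord_preimage_Ico (mul_nonneg (Nat.cast_nonneg _) (gam_pos n).le)]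
    · ring_nf
    · rwa [gam_eq_inv, mul_inv_le_iff₀ htwo, mul_comm (L : ℝ)]
  simp [hcell, measureReal_def, volume_pi_pi, hside, ENNReal.toReal_ofReal (gam_pos n).le]

lemma volume_real_torus : volume.real (Set.univ : Set (Torus d L)) = (L : ℝ) ^ d := by
  rw [measureReal_def, volume_pi, Measure.pi_univ]
  simp

lemma torusCoord_sitePos (n : ℕ) (p : Site d L n) (i : Fin d) :
    torusCoord (sitePos L n p i) = p i * gam n := by
  refine torusCoord_coe ⟨mul_nonneg (Nat.cast_nonneg _) (gam_pos n).le, ?_⟩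
  change _ * gam n < _
  rw [gam_eq_inv, mul_inv_lt_iff₀ (by positivity), mul_comm (L : ℝ)]
  exact_mod_cast (p i).2

lemma siteOf_sitePos (n : ℕ) (p : Site d L n) : siteOf L n (sitePos L n p) = p := by
  simp [siteOf_eq_iff, torusCoord_sitePos, mul_assoc, gam_mul_two_pow]

/-- The site of the grid of side `2^{-ℓ}` whose cube contains the fine site `p`. -/
noncomputable def coarseSite {k : ℕ} (ℓ : ℕ) (p : Site d L k) : Site d L ℓ :=
  siteOf L ℓ (sitePos L k p)

lemma coarseSite_siteOf {k ℓ : ℕ} (h : ℓ ≤ k) (x : Torus d L) :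
    coarseSite ℓ (siteOf L k x) = siteOf L ℓ x := by
  refine siteOf_eq_iff.2 fun i => ?_
  have hratio : gam k * 2 ^ ℓ = ((2 ^ (k - ℓ) : ℕ) : ℝ)⁻¹ := by
    push_cast
    refine eq_inv_of_mul_eq_one_left ?_
    rw [mul_assoc, ← pow_add, Nat.add_sub_cancel' h, gam_mul_two_pow]
  have hcoord : torusCoord (x i) * 2 ^ ℓ = torusCoord (x i) * 2 ^ k * (gam k * 2 ^ ℓ) := by
    linear_combination (- torusCoord (x i) * 2 ^ ℓ) * gam_mul_two_pow k
  have hfloor : (siteOf L k x i : ℝ) = (⌊torusCoord (x i) * 2 ^ k⌋ : ℝ) :=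
    mod_cast coe_siteOf_apply k x i
  rw [torusCoord_sitePos, coe_siteOf_apply, hcoord, hfloor, mul_assoc, hratio, ← div_eq_mul_inv,
    ← div_eq_mul_inv, Int.floor_div_natCast, Int.floor_div_natCast, Int.floor_intCast]

/-- The lower corner of the cube of side `2^{-n}` that contains `x`. -/
noncomputable def corner (n : ℕ) (x : Torus d L) : Torus d L := sitePos L n (siteOf L n x)

lemma dist_corner_apply_le (n : ℕ) (x : Torus d L) (i : Fin d) :
    dist (x i) (corner n x i) ≤ gam n := by
  have hfloor : (siteOf L n x i : ℝ) = (⌊torusCoord (x i) * 2 ^ n⌋ : ℝ) :=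
    mod_cast coe_siteOf_apply n x i
  have hle : |torusCoord (x i) - siteOf L n x i * gam n| ≤ gam n := by
    have hfract : torusCoord (x i) - siteOf L n x i * gam n
        = Int.fract (torusCoord (x i) * 2 ^ n) * gam n := by
      rw [Int.fract, ← hfloor]
      linear_combination (- torusCoord (x i)) * gam_mul_two_pow n
    rw [hfract, abs_of_nonneg (mul_nonneg (Int.fract_nonneg _) (gam_pos n).le)]
    exact mul_le_of_le_one_left (gam_pos n).le (Int.fract_lt_one _).le
  calc dist (x i) (corner n x i)
      = ‖((torusCoord (x i) - siteOf L n x i * gam n : ℝ) : AddCircle (L : ℝ))‖ := by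
        rw [AddCircle.coe_sub, coe_torusCoord, dist_eq_norm]; rfl
    _ ≤ gam n := QuotientAddGroup.norm_mk_le_norm.trans hle

lemma torusDist_corner_le (n : ℕ) (x : Torus d L) : torusDist x (corner n x) ≤ d * gam n := by
  have hnonneg : 0 ≤ d * gam n := mul_nonneg (Nat.cast_nonneg d) (gam_pos n).le
  refine Real.sqrt_le_iff.2 ⟨hnonneg, ?_⟩
  calc ∑ i, dist (x i) (corner n x i) ^ 2
      ≤ (∑ i, dist (x i) (corner n x i)) ^ 2 :=
        Finset.sum_sq_le_sq_sum_of_nonneg fun _ _ => dist_nonneg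
    _ ≤ (∑ _i : Fin d, gam n) ^ 2 := by
        gcongr; exact dist_corner_apply_le n x _
    _ = (d * gam n) ^ 2 := by simp

lemma abs_torusDist_sub_torusDist_corner_le (n : ℕ) (x y : Torus d L) :
    |torusDist x y - torusDist (corner n x) (corner n y)| ≤ 2 * d * gam n := by
  linarith [abs_torusDist_sub_torusDist_le x y (corner n x) (corner n y),
    torusDist_corner_le n x, torusDist_corner_le n y]

end Cells

section SiteIntegrals

variable {d L : ℕ} [Fact ((0 : ℝ) < L)]

lemma measurable_comp_siteOf (n : ℕ) (g : Site d L n → ℝ) :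
    Measurable fun x : Torus d L => g (siteOf L n x) :=
  (measurable_of_countable g).comp (measurable_siteOf n)

lemma integrable_comp_siteOf (n : ℕ) (g : Site d L n → ℝ) :
    Integrable fun x : Torus d L => g (siteOf L n x) := by
  refine .of_bound (measurable_comp_siteOf n g).aestronglyMeasurable (∑ p, ‖g p‖) ?_
  exact .of_forall fun x => Finset.single_le_sum (f := fun p => ‖g p‖)
    (fun _ _ => norm_nonneg _) (Finset.mem_univ _)

/-- The average of `f` over the cube of side `2^{-n}` at the site `c`. -/
noncomputable def cellAvg (n : ℕ) (f : Torus d L → ℝ) (c : Site d L n) : ℝ :=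
  (∫ x in cell n c, f x) / gam n ^ d

lemma setIntegral_cell (n : ℕ) (f : Torus d L → ℝ) (c : Site d L n) :
    ∫ x in cell n c, f x = gam n ^ d * cellAvg n f c :=
  (mul_div_cancel₀ _ (pow_pos (gam_pos n) d).ne').symm

lemma cellAvg_comp_siteOf (n : ℕ) (g : Site d L n → ℝ) :
    cellAvg n (fun x => g (siteOf L n x)) = g := by
  funext c
  have hcongr : ∫ x in cell n c, g (siteOf L n x) = ∫ _x in cell n c, g c :=
    setIntegral_congr_fun (measurableSet_cell n c) fun x hx => congrArg g hx
  rw [cellAvg, hcongr, setIntegral_const, volume_real_cell, smul_eq_mul,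
    mul_div_cancel_left₀ _ (pow_pos (gam_pos n) d).ne']

lemma integral_comp_siteOf_mul (n : ℕ) (g : Site d L n → ℝ) {f : Torus d L → ℝ}
    (hf : Integrable f) :
    ∫ x, g (siteOf L n x) * f x = gam n ^ d * ∑ p, g p * cellAvg n f p := by
  have hsplit (x : Torus d L) :
      g (siteOf L n x) * f x = ∑ p, g p * (cell n p).indicator f x := by
    rw [Finset.sum_eq_single (siteOf L n x)]
    · simp [cell]
    · exact fun p _ hp => by simp [cell, Set.indicator, hp.symm]
    · simp
  simp_rw [hsplit]
  rw [integral_finsetSum _ fun p _ => (hf.indicator (measurableSet_cell n p)).const_mul _]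
  simp_rw [integral_const_mul, integral_indicator (measurableSet_cell n _), setIntegral_cell,
    Finset.mul_sum, mul_left_comm]

lemma integral_eq_sum_cellAvg (n : ℕ) {f : Torus d L → ℝ} (hf : Integrable f) :
    ∫ x, f x = gam n ^ d * ∑ p, cellAvg n f p := by
  simpa only [one_mul] using integral_comp_siteOf_mul n (fun _ => 1) hf

lemma integral_comp_siteOf (n : ℕ) (g : Site d L n → ℝ) :
    ∫ x : Torus d L, g (siteOf L n x) = gam n ^ d * ∑ p, g p := by
  rw [integral_eq_sum_cellAvg n (integrable_comp_siteOf n g), cellAvg_comp_siteOf]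

lemma gam_pow_mul_card_site (n : ℕ) :
    gam n ^ d * (Fintype.card (Site d L n) : ℝ) = (L : ℝ) ^ d := by
  have h := integral_comp_siteOf (d := d) (L := L) n fun _ => 1
  simpa [volume_real_torus] using h.symm

lemma setIntegral_cell_comp_siteOf {k ℓ : ℕ} (h : ℓ ≤ k) (g : Site d L k → ℝ)
    (c : Site d L ℓ) :
    ∫ x in cell ℓ c, g (siteOf L k x)
      = gam k ^ d * ∑ p with coarseSite ℓ p = c, g p := by
  have hind : (cell ℓ c).indicator (fun x => g (siteOf L k x))
      = fun x => if coarseSite ℓ (siteOf L k x) = c then g (siteOf L k x) else 0 := by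
    ext x
    by_cases hx : siteOf L ℓ x = c <;> simp [cell, coarseSite_siteOf h, hx]
  rw [← integral_indicator (measurableSet_cell ℓ c), hind,
    integral_comp_siteOf k fun p => if coarseSite ℓ p = c then g p else 0, Finset.sum_filter]

/-- The number of fine sites of side `2^{-k}` in each cube of side `2^{-ℓ}`. -/
def sitesPerCell (d k ℓ : ℕ) : ℕ := 2 ^ (d * (k - ℓ))

lemma sitesPerCell_pos (d k ℓ : ℕ) : 0 < sitesPerCell d k ℓ := by
  unfold sitesPerCell; positivity

lemma gam_pow_eq_mul_sitesPerCell (d : ℕ) {k ℓ : ℕ} (h : ℓ ≤ k) :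
    gam ℓ ^ d = gam k ^ d * sitesPerCell d k ℓ := by
  rw [gam_eq_gam_mul_two_pow h, mul_pow, ← pow_mul, mul_comm (k - ℓ), sitesPerCell]
  push_cast
  rfl

lemma card_filter_coarseSite_eq {k ℓ : ℕ} (h : ℓ ≤ k) (c : Site d L ℓ) :
    (Finset.univ.filter fun p : Site d L k => coarseSite ℓ p = c).card
      = sitesPerCell d k ℓ := by
  have hvol := setIntegral_cell_comp_siteOf h (fun _ : Site d L k => 1) c
  rw [setIntegral_const, volume_real_cell, gam_pow_eq_mul_sitesPerCell d h] at hvol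
  simp only [smul_eq_mul, mul_one, Finset.sum_const, nsmul_eq_mul] at hvol
  exact_mod_cast (mul_left_cancel₀ (pow_pos (gam_pos k) d).ne' hvol).symm

end SiteIntegrals

section CoarseGraining

variable {d L : ℕ}

/-- Admissible magnetization profiles: measurable functions on the torus with values in
`[-1,1]`. -/
structure IsProfile (σ : Torus d L → ℝ) : Prop where
  measurable : Measurable σ
  mem_Icc : ∀ x, σ x ∈ Set.Icc (-1 : ℝ) 1

lemma IsProfile.abs_le_one {σ : Torus d L → ℝ} (hσ : IsProfile σ) (x : Torus d L) :
    |σ x| ≤ 1 :=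
  abs_le.2 (hσ.mem_Icc x)

variable [Fact ((0 : ℝ) < L)]

lemma IsProfile.integrable {σ : Torus d L → ℝ} (hσ : IsProfile σ) : Integrable σ :=
  .of_bound hσ.measurable.aestronglyMeasurable 1 (.of_forall hσ.abs_le_one)

lemma coarse_apply (n : ℕ) (f : Torus d L → ℝ) (x : Torus d L) :
    coarse L n f x = cellAvg n f (siteOf L n x) := by
  rw [coarse, cubeOf_eq_cell, ← measureReal_def, volume_real_cell, cellAvg]

lemma coarse_eq_coarse_iff {n : ℕ} {f g : Torus d L → ℝ} :
    coarse L n f = coarse L n g ↔ cellAvg n f = cellAvg n g := by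
  refine ⟨fun h => funext fun c => ?_, fun h => funext fun x => by simp_rw [coarse_apply, h]⟩
  simpa only [coarse_apply, siteOf_sitePos] using congrFun h (sitePos L n c)

lemma cellAvg_coarse (n : ℕ) (f : Torus d L → ℝ) :
    cellAvg n (coarse L n f) = cellAvg n f := by
  rw [funext (coarse_apply n f), cellAvg_comp_siteOf]

lemma integral_coarse (n : ℕ) {f : Torus d L → ℝ} (hf : Integrable f) :
    ∫ x, coarse L n f x = ∫ x, f x := by
  simp_rw [coarse_apply, integral_comp_siteOf, integral_eq_sum_cellAvg n hf]

lemma cellAvg_mem_Icc {σ : Torus d L → ℝ} (hσ : IsProfile σ) (n : ℕ) (c : Site d L n) :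
    cellAvg n σ c ∈ Set.Icc (-1 : ℝ) 1 := by
  have hpos : 0 < gam n ^ d := pow_pos (gam_pos n) d
  have hint : ‖∫ x in cell n c, σ x‖ ≤ 1 * volume.real (cell n c) :=
    norm_setIntegral_le_of_norm_le_const (measure_lt_top _ _) fun x _ => hσ.abs_le_one x
  rw [one_mul, volume_real_cell] at hint
  rw [Set.mem_Icc, ← abs_le, cellAvg, abs_div, abs_of_pos hpos]
  exact div_le_one_of_le₀ hint hpos.le

lemma isProfile_comp_siteOf {n : ℕ} {g : Site d L n → ℝ} (hg : ∀ p, g p ∈ Set.Icc (-1 : ℝ) 1) :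
    IsProfile fun x : Torus d L => g (siteOf L n x) :=
  ⟨measurable_comp_siteOf n g, fun _ => hg _⟩

lemma IsProfile.coarse {σ : Torus d L → ℝ} (hσ : IsProfile σ) (n : ℕ) :
    IsProfile (coarse L n σ) := by
  simpa only [← coarse_apply] using isProfile_comp_siteOf (cellAvg_mem_Icc hσ n)

lemma isProfile_stepFun {k : ℕ} (s : ConfigSpace d L k) : IsProfile (stepFun L k s) :=
  isProfile_comp_siteOf (g := fun p => spin (s p)) fun p => by
    cases s p <;> norm_num [spin]

end CoarseGraining

section PairEnergy

variable {d L : ℕ} [Fact ((0 : ℝ) < L)]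

/-- The quadratic interaction energy `∬ κ(x, y) σ(x) σ(y) dx dy` of the profile `σ` for the
pair interaction `κ`. -/
noncomputable def pairEnergy (κ : Torus d L → Torus d L → ℝ) (σ : Torus d L → ℝ) : ℝ :=
  ∫ x, ∫ y, κ x y * σ x * σ y

lemma volume_real_closedBall_le (x : Torus d L) {r : ℝ} (hr : 0 ≤ r) :
    volume.real (Metric.closedBall x r) ≤ (2 * r) ^ d := by
  have hside : (ENNReal.ofReal (min (L : ℝ) (2 * r))).toReal ≤ 2 * r := by
    rw [ENNReal.toReal_ofReal (le_min (Nat.cast_nonneg L) (by positivity))]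
    exact min_le_right _ _
  rw [measureReal_def, closedBall_pi _ hr, volume_pi_pi]
  simp only [AddCircle.volume_closedBall, Finset.prod_const, Finset.card_univ, Fintype.card_fin,
    ENNReal.toReal_pow]
  exact pow_le_pow_left₀ ENNReal.toReal_nonneg hside d

lemma abs_integral_integral_le {H : Torus d L → Torus d L → ℝ} {ε r : ℝ} (hε : 0 ≤ ε)
    (hr : 0 ≤ r) (hH : ∀ x y, |H x y| ≤ ε) (hfar : ∀ x y, r < torusDist x y → H x y = 0) :
    |∫ x, ∫ y, H x y| ≤ ε * (2 * r) ^ d * (L : ℝ) ^ d := by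
  have hinner (x : Torus d L) : ‖∫ y, H x y‖ ≤ ε * (2 * r) ^ d := by
    have hball : MeasurableSet (Metric.closedBall x r) := Metric.isClosed_closedBall.measurableSet
    have hbound (y : Torus d L) :
        ‖H x y‖ ≤ (Metric.closedBall x r).indicator (fun _ => ε) y := by
      by_cases hy : y ∈ Metric.closedBall x r
      · simpa [hy] using hH x y
      · have hxy : r < torusDist x y := by
          rw [Metric.mem_closedBall', not_le] at hy
          exact hy.trans_le (dist_le_torusDist x y)
        simp [hy, hfar x y hxy]
    calc ‖∫ y, H x y‖
        ≤ ∫ y, (Metric.closedBall x r).indicator (fun _ => ε) y :=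
          norm_integral_le_of_norm_le ((integrable_const ε).indicator hball) (.of_forall hbound)
      _ = ε * volume.real (Metric.closedBall x r) := by
          rw [integral_indicator hball, setIntegral_const, smul_eq_mul, mul_comm]
      _ ≤ ε * (2 * r) ^ d :=
          mul_le_mul_of_nonneg_left (volume_real_closedBall_le x hr) hε
  simpa only [volume_real_torus, Real.norm_eq_abs] using
    norm_integral_le_of_norm_le_const (μ := volume) (.of_forall hinner)

lemma integrable_pair {κ : Torus d L → Torus d L → ℝ} {M : ℝ}
    (hκ : Measurable (Function.uncurry κ)) (hM : ∀ x y, |κ x y| ≤ M) {σ : Torus d L → ℝ}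
    (hσ : IsProfile σ) :
    Integrable (fun z : Torus d L × Torus d L => κ z.1 z.2 * σ z.1 * σ z.2)
      (volume.prod volume) := by
  refine .of_bound (C := M) ?_ (.of_forall fun z => ?_)
  · exact ((hκ.mul (hσ.measurable.comp measurable_fst)).mul
      (hσ.measurable.comp measurable_snd)).aestronglyMeasurable
  · rw [Real.norm_eq_abs, abs_mul, abs_mul, mul_assoc]
    exact (mul_le_of_le_one_right (abs_nonneg _) (mul_le_one₀ (hσ.abs_le_one _) (abs_nonneg _)
      (hσ.abs_le_one _))).trans (hM _ _)

lemma abs_pairEnergy_sub_le {κ κ' : Torus d L → Torus d L → ℝ} {M ε r : ℝ}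
    (hκ : Measurable (Function.uncurry κ)) (hκ' : Measurable (Function.uncurry κ'))
    (hM : ∀ x y, |κ x y| ≤ M) (hM' : ∀ x y, |κ' x y| ≤ M) {σ σ' : Torus d L → ℝ}
    (hσ : IsProfile σ) (hσ' : IsProfile σ') (hε : 0 ≤ ε) (hr : 0 ≤ r)
    (hclose : ∀ x y, |κ x y * σ x * σ y - κ' x y * σ' x * σ' y| ≤ ε)
    (hfar : ∀ x y, r < torusDist x y → κ x y * σ x * σ y - κ' x y * σ' x * σ' y = 0) :
    |pairEnergy κ σ - pairEnergy κ' σ'| ≤ ε * (2 * r) ^ d * (L : ℝ) ^ d := by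
  rw [pairEnergy, pairEnergy,
    ← integral_integral_sub (integrable_pair hκ hM hσ) (integrable_pair hκ' hM' hσ')]
  exact abs_integral_integral_le hε hr hclose hfar

lemma pairEnergy_comp_siteOf (n : ℕ) (G : Site d L n → Site d L n → ℝ) {σ : Torus d L → ℝ}
    (hσ : Integrable σ) :
    pairEnergy (fun x y => G (siteOf L n x) (siteOf L n y)) σ
      = gam n ^ d * gam n ^ d * ∑ p, ∑ q, G p q * cellAvg n σ p * cellAvg n σ q := by
  have hinner (x : Torus d L) : ∫ y, G (siteOf L n x) (siteOf L n y) * σ x * σ y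
      = gam n ^ d * (∑ q, G (siteOf L n x) q * cellAvg n σ q) * σ x := by
    rw [← integral_comp_siteOf_mul n (G (siteOf L n x)) hσ, ← integral_mul_const]
    simp only [mul_right_comm]
  simp_rw [pairEnergy, hinner]
  rw [integral_comp_siteOf_mul n (fun p => gam n ^ d * ∑ q, G p q * cellAvg n σ q) hσ,
    mul_assoc (gam n ^ d)]
  congr 1
  simp_rw [mul_assoc (gam n ^ d), ← Finset.mul_sum, Finset.sum_mul]
  congr! 3
  ring

lemma measurable_uncurry_comp_siteOf (n : ℕ) (G : Site d L n → Site d L n → ℝ) :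
    Measurable (Function.uncurry fun x y : Torus d L => G (siteOf L n x) (siteOf L n y)) :=
  (measurable_of_countable (Function.uncurry G)).comp
    (((measurable_siteOf n).comp measurable_fst).prodMk ((measurable_siteOf n).comp measurable_snd))

end PairEnergy

section KacEnergy

/-- The Kac interaction `J(|x-y|)` on the torus. -/
noncomputable def kac {d L : ℕ} (J : ℝ → ℝ) (x y : Torus d L) : ℝ := J (torusDist x y)

/-- The Kac interaction with `x` and `y` moved to the lower corners of their cubes of side
`2^{-n}`. It depends on the cubes only, so that the associated energy sees a profile only through
its cube averages. -/
noncomputable def cellKac {d L : ℕ} [Fact ((0 : ℝ) < L)] (J : ℝ → ℝ) (n : ℕ) (x y : Torus d L) :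
    ℝ :=
  kac J (corner n x) (corner n y)

/-- The modulus, per unit volume and mesh size, of the replacement of `kac` by `cellKac` for a
potential with Lipschitz constant `K` and range `R`. -/
noncomputable def meshConst (d : ℕ) (K R : NNReal) : ℝ := K * (2 * d) * (2 * (R + 2 * d)) ^ d

/-- The modulus, per unit volume, of continuity of the Kac energy in the supremum norm for a
potential with Lipschitz constant `K` and range `R`. -/
noncomputable def supConst (d : ℕ) (K R : NNReal) : ℝ := K * (R + 1) * 2 * (2 * R) ^ d

lemma meshConst_nonneg (d : ℕ) (K R : NNReal) : 0 ≤ meshConst d K R := by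
  unfold meshConst; positivity

lemma supConst_nonneg (d : ℕ) (K R : NNReal) : 0 ≤ supConst d K R := by
  unfold supConst; positivity

variable {d L : ℕ} {J : ℝ → ℝ} {K R : NNReal}

lemma abs_le_of_lipschitzOnWith_of_eq_zero (hJ : LipschitzOnWith K J (Set.Ici 0))
    (hR : ∀ r, (R : ℝ) < r → J r = 0) {r : ℝ} (hr : 0 ≤ r) : |J r| ≤ K * (R + 1) := by
  rcases lt_or_ge (R : ℝ) r with hlt | hle
  · rw [hR r hlt, abs_zero]
    positivity
  · have hlip := hJ.dist_le_mul r hr (R + 1) (Set.mem_Ici.2 (by positivity))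
    rw [hR (R + 1) (lt_add_one _), dist_zero_right, Real.norm_eq_abs, Real.dist_eq] at hlip
    refine hlip.trans (mul_le_mul_of_nonneg_left ?_ K.2)
    rw [abs_le]
    constructor <;> linarith

lemma abs_kac_le (hJ : LipschitzOnWith K J (Set.Ici 0)) (hR : ∀ r, (R : ℝ) < r → J r = 0)
    (x y : Torus d L) : |kac J x y| ≤ K * (R + 1) :=
  abs_le_of_lipschitzOnWith_of_eq_zero hJ hR (torusDist_nonneg x y)

lemma measurable_kac (hJ : LipschitzOnWith K J (Set.Ici 0)) :
    Measurable (Function.uncurry (kac (d := d) (L := L) J)) :=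
  (hJ.continuousOn.comp_continuous continuous_torusDist
    fun z => torusDist_nonneg z.1 z.2).measurable

variable [Fact ((0 : ℝ) < L)]

lemma abs_kac_sub_cellKac_le (hJ : LipschitzOnWith K J (Set.Ici 0)) (n : ℕ) (x y : Torus d L) :
    |kac J x y - cellKac J n x y| ≤ K * (2 * d * gam n) :=
  (hJ.dist_le_mul _ (torusDist_nonneg x y) _ (torusDist_nonneg _ _)).trans
    (mul_le_mul_of_nonneg_left (abs_torusDist_sub_torusDist_corner_le n x y) K.2)

lemma kac_sub_cellKac_eq_zero (hR : ∀ r, (R : ℝ) < r → J r = 0) (n : ℕ) {x y : Torus d L}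
    (hxy : R + 2 * d < torusDist x y) : kac J x y - cellKac J n x y = 0 := by
  have hmesh : 2 * d * gam n ≤ 2 * (d : ℝ) :=
    mul_le_of_le_one_right (by positivity) (gam_le_one n)
  have hcorner := (abs_le.1 (abs_torusDist_sub_torusDist_corner_le n x y)).2
  rw [cellKac, kac, kac, hR _ (by linarith), hR _ (by linarith), sub_zero]

lemma abs_pairEnergy_kac_sub_cellKac_le (hJ : LipschitzOnWith K J (Set.Ici 0))
    (hR : ∀ r, (R : ℝ) < r → J r = 0) (n : ℕ) {σ : Torus d L → ℝ} (hσ : IsProfile σ) :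
    |pairEnergy (kac J) σ - pairEnergy (cellKac J n) σ| ≤
      meshConst d K R * (L : ℝ) ^ d * gam n := by
  have hmeas : Measurable (Function.uncurry (cellKac (d := d) (L := L) J n)) :=
    measurable_uncurry_comp_siteOf n fun p q => kac J (sitePos L n p) (sitePos L n q)
  have hfactor (x y : Torus d L) : kac J x y * σ x * σ y - cellKac J n x y * σ x * σ y
      = (kac J x y - cellKac J n x y) * (σ x * σ y) := by ring
  have hgam := gam_pos n
  refine (abs_pairEnergy_sub_le (ε := K * (2 * d * gam n)) (r := R + 2 * d) (measurable_kac hJ)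
    hmeas (abs_kac_le hJ hR) (fun x y => abs_kac_le hJ hR _ _) hσ hσ (by positivity)
    (by positivity) (fun x y => ?_) fun x y hxy => ?_).trans_eq ?_
  · rw [hfactor, abs_mul, abs_mul]
    exact (mul_le_of_le_one_right (abs_nonneg _) (mul_le_one₀ (hσ.abs_le_one x) (abs_nonneg _)
      (hσ.abs_le_one y))).trans (abs_kac_sub_cellKac_le hJ n x y)
  · rw [hfactor, kac_sub_cellKac_eq_zero hR n hxy, zero_mul]
  · rw [meshConst]; ring

lemma pairEnergy_cellKac_coarse (n : ℕ) {σ : Torus d L → ℝ} (hσ : IsProfile σ) :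
    pairEnergy (cellKac J n) (coarse L n σ) = pairEnergy (cellKac J n) σ := by
  have hsum {τ : Torus d L → ℝ} (hτ : Integrable τ) := pairEnergy_comp_siteOf n
    (fun p q => kac J (sitePos L n p) (sitePos L n q)) hτ
  refine (hsum (hσ.coarse n).integrable).trans ?_
  rw [cellAvg_coarse]
  exact (hsum hσ.integrable).symm

lemma abs_pairEnergy_coarse_sub_le (hJ : LipschitzOnWith K J (Set.Ici 0))
    (hR : ∀ r, (R : ℝ) < r → J r = 0) (n : ℕ) {σ : Torus d L → ℝ} (hσ : IsProfile σ) :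
    |pairEnergy (kac J) (coarse L n σ) - pairEnergy (kac J) σ| ≤
      2 * (meshConst d K R * (L : ℝ) ^ d * gam n) := by
  have hfine := abs_pairEnergy_kac_sub_cellKac_le hJ hR n hσ
  have hcoarse := abs_pairEnergy_kac_sub_cellKac_le hJ hR n (hσ.coarse n)
  rw [pairEnergy_cellKac_coarse n hσ] at hcoarse
  rw [abs_le] at *
  constructor <;> linarith

lemma pairEnergy_cellKac_stepFun (J : ℝ → ℝ) {k : ℕ} (s : ConfigSpace d L k) :
    pairEnergy (cellKac J k) (stepFun L k s) = -2 * (gam k ^ d * Ham L k J s) := by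
  refine (pairEnergy_comp_siteOf k (fun p q => kac J (sitePos L k p) (sitePos L k q))
    (isProfile_stepFun s).integrable).trans ?_
  unfold stepFun
  rw [cellAvg_comp_siteOf k fun p => spin (s p)]
  simp only [Ham, kac]
  ring

lemma abs_gam_pow_mul_ham_add_le (hJ : LipschitzOnWith K J (Set.Ici 0))
    (hR : ∀ r, (R : ℝ) < r → J r = 0) {k ℓ : ℕ} (h : ℓ ≤ k) (s : ConfigSpace d L k) :
    |gam k ^ d * Ham L k J s + 1 / 2 * pairEnergy (kac J) (coarse L ℓ (stepFun L k s))| ≤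
      2 * (meshConst d K R * (L : ℝ) ^ d * gam ℓ) := by
  have hmicro := abs_pairEnergy_kac_sub_cellKac_le hJ hR k (isProfile_stepFun s)
  have hcoarse := abs_pairEnergy_coarse_sub_le hJ hR ℓ (isProfile_stepFun s)
  have hmesh : meshConst d K R * (L : ℝ) ^ d * gam k ≤ meshConst d K R * (L : ℝ) ^ d * gam ℓ :=
    mul_le_mul_of_nonneg_left (gam_antitone h)
      (mul_nonneg (meshConst_nonneg d K R) (by positivity))
  rw [pairEnergy_cellKac_stepFun] at hmicro
  rw [abs_le] at *
  constructor <;> linarith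

lemma abs_pairEnergy_kac_sub_le (hJ : LipschitzOnWith K J (Set.Ici 0))
    (hR : ∀ r, (R : ℝ) < r → J r = 0) {σ τ : Torus d L → ℝ} (hσ : IsProfile σ)
    (hτ : IsProfile τ) {ε : ℝ} (hε : 0 ≤ ε) (hclose : ∀ x, |σ x - τ x| ≤ ε) :
    |pairEnergy (kac J) σ - pairEnergy (kac J) τ| ≤ supConst d K R * (L : ℝ) ^ d * ε := by
  have hprod (x y : Torus d L) : |σ x * σ y - τ x * τ y| ≤ 2 * ε := by
    calc |σ x * σ y - τ x * τ y| = |(σ x - τ x) * σ y + τ x * (σ y - τ y)| := by ring_nf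
      _ ≤ |σ x - τ x| * |σ y| + |τ x| * |σ y - τ y| := by
          simpa only [abs_mul] using abs_add_le ((σ x - τ x) * σ y) (τ x * (σ y - τ y))
      _ ≤ ε * 1 + 1 * ε := by
          gcongr
          exacts [hclose x, hσ.abs_le_one y, hτ.abs_le_one x, hclose y]
      _ = 2 * ε := by ring
  have hfactor (x y : Torus d L) : kac J x y * σ x * σ y - kac J x y * τ x * τ y
      = kac J x y * (σ x * σ y - τ x * τ y) := by ring
  refine (abs_pairEnergy_sub_le (ε := K * (R + 1) * (2 * ε)) (r := R) (measurable_kac hJ)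
    (measurable_kac hJ) (abs_kac_le hJ hR) (abs_kac_le hJ hR) hσ hτ (by positivity)
    (by positivity) (fun x y => ?_) fun x y hxy => ?_).trans_eq ?_
  · rw [hfactor, abs_mul]
    exact mul_le_mul (abs_kac_le hJ hR x y) (hprod x y) (abs_nonneg _) (by positivity)
  · rw [hfactor, kac, hR _ hxy, zero_mul]
  · rw [supConst]; ring

end KacEnergy

lemma KacPotential.exists_lipschitzOnWith {d : ℕ} {J : ℝ → ℝ} (hJ : KacPotential d J) :
    ∃ K : NNReal, LipschitzOnWith K J (Set.Ici 0) := by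
  have hsmooth : ContDiffOn ℝ 1 J (Set.Icc 0 1) := hJ.smooth.of_le (mod_cast le_top)
  obtain ⟨K, hK⟩ :=
    hsmooth.exists_lipschitzOnWith one_ne_zero (convex_Icc 0 1) isCompact_Icc
  have hzero : Set.EqOn J 0 (Set.Ici 1) := by
    rw [← closure_Ioi]
    exact Set.EqOn.closure (fun r hr => hJ.support r hr) hJ.continuous continuous_zero
  have hmin (r : ℝ) : J r = J (min r 1) := by
    rcases le_total r 1 with h | h
    · rw [min_eq_left h]
    · rw [min_eq_right h, hzero h, hzero Set.self_mem_Ici]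
      rfl
  refine ⟨K, .of_dist_le_mul fun r hr t ht => ?_⟩
  have hmem {r : ℝ} (hr : r ∈ Set.Ici (0 : ℝ)) : min r 1 ∈ Set.Icc (0 : ℝ) 1 :=
    ⟨le_min hr zero_le_one, min_le_right _ _⟩
  rw [hmin r, hmin t]
  refine (hK.dist_le_mul _ (hmem hr) _ (hmem ht)).trans (mul_le_mul_of_nonneg_left ?_ K.2)
  simpa [Real.dist_eq] using abs_min_sub_min_le_max r 1 t 1

section Entropy

lemma log_factorial_le {n : ℕ} (hn : n ≠ 0) :
    log n.factorial ≤ n * log n - n + log n / 2 + 1 := by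
  obtain ⟨j, rfl⟩ := Nat.exists_eq_succ_of_ne_zero hn
  have hanti : log (Stirling.stirlingSeq (j + 1)) ≤ log (Stirling.stirlingSeq 1) :=
    Stirling.log_stirlingSeq'_antitone j.zero_le
  have hn' : ((j + 1 : ℕ) : ℝ) ≠ 0 := Nat.cast_ne_zero.2 hn
  rw [Stirling.log_stirlingSeq_formula, Stirling.stirlingSeq_one,
    log_div (exp_ne_zero 1) (by simp), log_exp, log_sqrt zero_le_two,
    log_mul two_ne_zero hn', log_div hn' (exp_ne_zero 1), log_exp] at hanti
  linarith

lemma log_factorial_mem_Icc (n : ℕ) :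
    log n.factorial ∈ Set.Icc (n * log n - n) (n * log n - n + log n / 2 + 1) := by
  rcases eq_or_ne n 0 with rfl | hn
  · simp
  refine ⟨?_, log_factorial_le hn⟩
  have h := Stirling.le_log_factorial_stirling hn
  have hlog : 0 ≤ log (2 * π) := log_nonneg (by linarith [pi_gt_three])
  linarith [log_natCast_nonneg n]

lemma mul_negMulLog_div {n : ℝ} (hn : n ≠ 0) (a : ℝ) :
    n * negMulLog (a / n) = a * log n - a * log a := by
  rcases eq_or_ne a 0 with rfl | ha
  · simp
  rw [negMulLog, log_div ha hn]
  field_simp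
  ring

lemma mul_binEntropy_div {n j : ℕ} (hn : n ≠ 0) (hj : j ≤ n) :
    n * binEntropy (j / n) = n * log n - j * log j - (n - j : ℕ) * log (n - j : ℕ) := by
  have hn' : (n : ℝ) ≠ 0 := Nat.cast_ne_zero.2 hn
  have hsub : 1 - (j : ℝ) / n = (n - j : ℕ) / n := by
    rw [Nat.cast_sub hj, sub_div, div_self hn']
  rw [binEntropy_eq_negMulLog_add_negMulLog_one_sub, hsub, mul_add, mul_negMulLog_div hn',
    mul_negMulLog_div hn', Nat.cast_sub hj]
  ring

/-- The relative precision, per microscopic site, with which entropy is resolved by counting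
configurations in a cell of `n` sites. -/
noncomputable def countingError (n : ℕ) : ℝ := (1 + log n) / n

lemma mul_countingError {n : ℕ} (hn : n ≠ 0) : n * countingError n = 1 + log n :=
  mul_div_cancel₀ _ (Nat.cast_ne_zero.2 hn)

lemma countingError_nonneg (n : ℕ) : 0 ≤ countingError n :=
  div_nonneg (add_nonneg zero_le_one (log_natCast_nonneg n)) n.cast_nonneg

lemma abs_log_choose_sub_le {n j : ℕ} (hn : n ≠ 0) (hj : j ≤ n) :
    |log (n.choose j) - n * binEntropy (j / n)| ≤ n * (2 * countingError n) := by
  have hchoose : log (n.choose j)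
      = log n.factorial - log j.factorial - log (n - j).factorial := by
    rw [Nat.choose_eq_factorial_div_factorial hj,
      Nat.cast_div (Nat.factorial_mul_factorial_dvd_factorial hj) (by positivity), Nat.cast_mul,
      log_div (by positivity) (by positivity), log_mul (by positivity) (by positivity), sub_sub]
  have hlog {i : ℕ} (hi : i ≤ n) : 0 ≤ log i ∧ log i ≤ log n := by
    refine ⟨log_natCast_nonneg i, ?_⟩
    rcases eq_or_ne i 0 with rfl | hi0
    · simpa using log_natCast_nonneg n
    · gcongr
  rw [mul_left_comm, mul_countingError hn, hchoose, mul_binEntropy_div hn hj, abs_le]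
  obtain ⟨hn₁, hn₂⟩ := log_factorial_mem_Icc n
  obtain ⟨hj₁, hj₂⟩ := log_factorial_mem_Icc j
  obtain ⟨hk₁, hk₂⟩ := log_factorial_mem_Icc (n - j)
  have hsub : ((n - j : ℕ) : ℝ) = n - j := Nat.cast_sub hj
  constructor <;> linarith [hlog hj, hlog (Nat.sub_le n j), hlog le_rfl]

lemma negMulLog_le_sub_sub_mul_log {a b : ℝ} (ha : 0 ≤ a) (hb : 0 < b) :
    negMulLog a ≤ b - a - a * log b := by
  rcases ha.eq_or_lt with rfl | ha
  · simpa using hb.le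
  have h := mul_le_mul_of_nonneg_left (log_le_sub_one_of_pos (div_pos hb ha)) ha.le
  rw [log_div hb.ne' ha.ne', mul_sub_one, mul_div_cancel₀ _ ha.ne'] at h
  rw [negMulLog]
  linarith

-- The tangent to `negMulLog` at `j / n`, or at `1 / n` when `j = 0`, has slope at most
-- `1 + log n` in absolute value.
lemma negMulLog_le_add_countingError {n j : ℕ} {a : ℝ} (hn : n ≠ 0) (hj : j ≤ n) (ha : 0 ≤ a)
    (h : |(j : ℝ) - n * a| ≤ 1) : negMulLog a ≤ negMulLog (j / n) + countingError n := by
  have hn' : (0 : ℝ) < n := by positivity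
  rw [← mul_le_mul_iff_right₀ hn', mul_add, mul_countingError hn, mul_negMulLog_div hn'.ne']
  rcases eq_or_ne j 0 with rfl | hj0
  · have htan := mul_le_mul_of_nonneg_left
      (negMulLog_le_sub_sub_mul_log ha (inv_pos.2 hn')) hn'.le
    rw [log_inv, mul_sub, mul_sub, mul_inv_cancel₀ hn'.ne'] at htan
    simp only [Nat.cast_zero, zero_sub, abs_neg, abs_of_nonneg (mul_nonneg hn'.le ha)] at h
    have hlin : n * a * log n ≤ 1 * log n := by gcongr
    simp only [Nat.cast_zero, zero_mul]
    linarith [mul_nonneg hn'.le ha]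
  · have hj' : (0 : ℝ) < j := by positivity
    have htan := mul_le_mul_of_nonneg_left
      (negMulLog_le_sub_sub_mul_log ha (div_pos hj' hn')) hn'.le
    rw [log_div hj'.ne' hn'.ne', mul_sub, mul_sub, mul_div_cancel₀ _ hn'.ne'] at htan
    have hgap : 0 ≤ log n - log j := sub_nonneg.2 (by gcongr)
    have hlin : (n * a - j) * (log n - log j) ≤ 1 * (log n - log j) :=
      mul_le_mul_of_nonneg_right (by linarith [(abs_le.1 h).1]) hgap
    linarith [log_natCast_nonneg j, (abs_le.1 h).2]

lemma binEntropy_le_add_countingError {n j : ℕ} {p : ℝ} (hn : n ≠ 0) (hj : j ≤ n)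
    (hp : p ∈ Set.Icc (0 : ℝ) 1) (h : |(j : ℝ) - n * p| ≤ 1) :
    binEntropy p ≤ binEntropy (j / n) + 2 * countingError n := by
  have hsub : 1 - (j : ℝ) / n = (n - j : ℕ) / n := by
    rw [Nat.cast_sub hj, sub_div, div_self (by positivity)]
  have h' : |((n - j : ℕ) : ℝ) - n * (1 - p)| ≤ 1 := by
    rw [Nat.cast_sub hj, abs_sub_comm]
    ring_nf at h ⊢
    exact h
  simp only [binEntropy_eq_negMulLog_add_negMulLog_one_sub, hsub]
  linarith [negMulLog_le_add_countingError hn hj hp.1 h,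
    negMulLog_le_add_countingError hn (Nat.sub_le n j) (sub_nonneg.2 hp.2) h']

lemma ient_two_mul_sub_one (p : ℝ) : ient (2 * p - 1) = -binEntropy p := by
  rw [ient, binEntropy_eq_negMulLog_add_negMulLog_one_sub, negMulLog, negMulLog]
  ring_nf

lemma ient_eq_neg_binEntropy (m : ℝ) : ient m = -binEntropy ((1 + m) / 2) := by
  rw [← ient_two_mul_sub_one, mul_div_cancel₀ _ two_ne_zero, add_sub_cancel_left]

lemma continuous_ient : Continuous ient := by
  simp_rw [funext ient_eq_neg_binEntropy]
  fun_prop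

lemma convexOn_ient : ConvexOn ℝ (Set.Icc (-1 : ℝ) 1) ient := by
  refine ⟨convex_Icc _ _, fun x hx y hy a b ha hb hab => ?_⟩
  have hmem {z : ℝ} (hz : z ∈ Set.Icc (-1 : ℝ) 1) : (1 + z) / 2 ∈ Set.Icc (0 : ℝ) 1 :=
    ⟨by linarith [hz.1], by linarith [hz.2]⟩
  have hmid : (1 + (a * x + b * y)) / 2 = a * ((1 + x) / 2) + b * ((1 + y) / 2) := by
    linear_combination -(1 / 2) * hab
  have hconc := strictConcave_binEntropy.concaveOn.2 (hmem hx) (hmem hy) ha hb hab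
  simp only [smul_eq_mul, ient_eq_neg_binEntropy, hmid] at hconc ⊢
  linarith

variable {d L : ℕ} [Fact ((0 : ℝ) < L)]

lemma IsProfile.integrable_ient {σ : Torus d L → ℝ} (hσ : IsProfile σ) :
    Integrable fun x => ient (σ x) := by
  obtain ⟨C, hC⟩ := isCompact_Icc.exists_bound_of_continuousOn
    (continuous_ient.continuousOn (s := Set.Icc (-1) 1))
  exact .of_bound (continuous_ient.measurable.comp hσ.measurable).aestronglyMeasurable C
    (.of_forall fun x => hC _ (hσ.mem_Icc x))

lemma cellAvg_eq_setAverage (n : ℕ) (f : Torus d L → ℝ) (c : Site d L n) :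
    cellAvg n f c = ⨍ x in cell n c, f x := by
  rw [setAverage_eq, volume_real_cell, cellAvg, smul_eq_mul, div_eq_inv_mul]

lemma ient_cellAvg_le {σ : Torus d L → ℝ} (hσ : IsProfile σ) (n : ℕ) (c : Site d L n) :
    ient (cellAvg n σ c) ≤ cellAvg n (fun x => ient (σ x)) c := by
  have hvol : volume (cell n c) ≠ 0 := fun h => (pow_pos (gam_pos n) d).ne' <| by
    rw [← volume_real_cell n c, measureReal_def, h, ENNReal.toReal_zero]
  simp_rw [cellAvg_eq_setAverage]
  exact convexOn_ient.map_set_average_le continuous_ient.continuousOn isClosed_Icc hvol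
    (measure_ne_top _ _) (.of_forall hσ.mem_Icc) hσ.integrable.integrableOn
    hσ.integrable_ient.integrableOn

lemma integral_ient_coarse (n : ℕ) (f : Torus d L → ℝ) :
    ∫ x, ient (coarse L n f x) = gam n ^ d * ∑ c, ient (cellAvg n f c) := by
  simp_rw [coarse_apply]
  exact integral_comp_siteOf n fun c => ient (cellAvg n f c)

end Entropy

section Combinatorics

lemma exists_sum_eq_floor_sum {ι : Type*} {f : ι → ℝ} (hf : ∀ i, 0 ≤ f i) (s : Finset ι) :
    ∃ g : ι → ℕ, (∀ i ∈ s, ⌊f i⌋₊ ≤ g i ∧ g i ≤ ⌈f i⌉₊) ∧ ∑ i ∈ s, g i = ⌊∑ i ∈ s, f i⌋₊ := by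
  classical
  induction s using Finset.induction_on with
  | empty => exact ⟨fun _ => 0, by simp, by simp⟩
  | insert a s ha ih =>
    obtain ⟨g, hg, hsum⟩ := ih
    have hS : 0 ≤ ∑ i ∈ s, f i := Finset.sum_nonneg fun i _ => hf i
    have hlow : ⌊f a⌋₊ + ⌊∑ i ∈ s, f i⌋₊ ≤ ⌊f a + ∑ i ∈ s, f i⌋₊ := by
      refine Nat.le_floor ?_
      push_cast
      exact add_le_add (Nat.floor_le (hf a)) (Nat.floor_le hS)
    have hupp : ⌊f a + ∑ i ∈ s, f i⌋₊ ≤ ⌈f a⌉₊ + ⌊∑ i ∈ s, f i⌋₊ := by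
      rw [add_comm ⌈f a⌉₊, ← Nat.floor_add_natCast hS, add_comm (f a)]
      exact Nat.floor_le_floor (by gcongr; exact Nat.le_ceil _)
    refine ⟨Function.update g a (⌊f a + ∑ i ∈ s, f i⌋₊ - ⌊∑ i ∈ s, f i⌋₊), fun i hi => ?_, ?_⟩
    · rcases eq_or_ne i a with rfl | hia
      · rw [Function.update_self]
        omega
      · rw [Function.update_of_ne hia]
        exact hg i ((Finset.mem_insert.1 hi).resolve_left hia)
    · rw [Finset.sum_insert ha, Finset.sum_insert ha, Function.update_self,
        Finset.sum_update_of_notMem ha, hsum]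
      omega

lemma abs_natCast_sub_le_one {x : ℝ} {j : ℕ} (h : ⌊x⌋₊ ≤ j ∧ j ≤ ⌈x⌉₊) (hx : 0 ≤ x) :
    |(j : ℝ) - x| ≤ 1 := by
  have hfloor : (⌊x⌋₊ : ℝ) ≤ j := Nat.cast_le.2 h.1
  have hceil : (j : ℝ) ≤ ⌈x⌉₊ := Nat.cast_le.2 h.2
  rw [abs_le]
  constructor <;> linarith [Nat.lt_floor_add_one x, Nat.ceil_lt_add_one hx]

/-- The occupation numbers of a configuration `s`: the number of occupied sites in each fibre
of `f`. -/
def fiberCount {α κ : Type*} [Fintype α] [DecidableEq κ] (f : α → κ) (s : α → Bool) (c : κ) :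
    ℕ :=
  (Finset.univ.filter fun p => f p = c ∧ s p = true).card

section FiberCount

variable {α κ : Type*} [Fintype α] [Fintype κ] [DecidableEq κ] (f : α → κ)

lemma sum_fiberCount (s : α → Bool) :
    ∑ c, fiberCount f s c = (Finset.univ.filter fun p => s p = true).card := by
  rw [Finset.card_eq_sum_card_fiberwise (f := f) (t := Finset.univ) (by simp)]
  exact Finset.sum_congr rfl fun c _ => by
    rw [fiberCount, Finset.filter_filter]
    simp only [and_comm]

lemma card_filter_fiberCount_eq [DecidableEq α] (N : κ → ℕ) :
    (Finset.univ.filter fun s => fiberCount f s = N).card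
      = ∏ c, (Finset.univ.filter fun p => f p = c).card.choose (N c) := by
  simp only [← Finset.card_powersetCard, ← Fintype.card_piFinset]
  have hfiber {g : κ → Finset α} {c : κ} {p : α}
      (hg : ∀ c, g c ⊆ Finset.univ.filter fun p => f p = c) (hp : p ∈ g c) : f p = c := by
    simpa using hg c hp
  have hset {g : κ → Finset α} (hg : ∀ c, g c ⊆ Finset.univ.filter fun p => f p = c) :
      (fun c => Finset.univ.filter fun p => f p = c ∧ decide (p ∈ g (f p)) = true) = g := by
    ext c p
    simp only [Finset.mem_filter, Finset.mem_univ, true_and, decide_eq_true_eq]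
    exact ⟨by rintro ⟨rfl, h⟩; exact h, fun h => ⟨hfiber hg h, by rwa [hfiber hg h]⟩⟩
  refine Finset.card_nbij' (fun s c => Finset.univ.filter fun p => f p = c ∧ s p = true)
    (fun g p => decide (p ∈ g (f p))) (fun s hs => ?_) (fun g hg => ?_) (fun s _ => ?_)
    (fun g hg => ?_)
  · simp only [Finset.coe_filter, Finset.mem_univ, true_and, Set.mem_ofPred_eq] at hs
    simp only [Finset.mem_coe, Fintype.mem_piFinset, Finset.mem_powersetCard]
    exact fun c => ⟨Finset.monotone_filter_right _ fun _ _ h => h.1, congrFun hs c⟩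
  · simp only [Finset.mem_coe, Fintype.mem_piFinset, Finset.mem_powersetCard] at hg
    simp only [Finset.coe_filter, Finset.mem_univ, true_and, Set.mem_ofPred_eq]
    exact funext fun c => by rw [fiberCount, congrFun (hset fun c => (hg c).1) c, (hg c).2]
  · ext p; simp
  · simp only [Finset.mem_coe, Fintype.mem_piFinset, Finset.mem_powersetCard] at hg
    exact hset fun c => (hg c).1

end FiberCount

section UniformFibers

variable {α κ : Type*} [Fintype α] [DecidableEq κ] {f : α → κ} {n : ℕ}

lemma fiberCount_le (hf : ∀ c, (Finset.univ.filter fun p => f p = c).card = n) (s : α → Bool)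
    (c : κ) : fiberCount f s c ≤ n :=
  hf c ▸ Finset.card_le_card (Finset.monotone_filter_right _ fun _ _ h => h.1)

lemma exists_fiberCount_eq [Finite κ]
    (hf : ∀ c, (Finset.univ.filter fun p => f p = c).card = n) {N : κ → ℕ} (hN : ∀ c, N c ≤ n) :
    ∃ s : α → Bool, fiberCount f s = N := by
  classical
  have := Fintype.ofFinite κ
  have hpos : 0 < (Finset.univ.filter fun s => fiberCount f s = N).card := by
    simp_rw [card_filter_fiberCount_eq, hf]
    exact Finset.prod_pos fun c _ => Nat.choose_pos (hN c)
  obtain ⟨s, hs⟩ := Finset.card_pos.1 hpos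
  exact ⟨s, (Finset.mem_filter.1 hs).2⟩

variable [Fintype κ]

lemma abs_log_card_filter_fiberCount_sub_le [DecidableEq α]
    (hf : ∀ c, (Finset.univ.filter fun p => f p = c).card = n) (hn : n ≠ 0) {N : κ → ℕ}
    (hN : ∀ c, N c ≤ n) :
    |log (Finset.univ.filter fun s => fiberCount f s = N).card
        - n * ∑ c, binEntropy (N c / n)|
      ≤ n * Fintype.card κ * (2 * countingError n) := by
  simp_rw [card_filter_fiberCount_eq, hf, Nat.cast_prod]
  rw [log_prod fun c _ => Nat.cast_ne_zero.2 (Nat.choose_pos (hN c)).ne', Finset.mul_sum,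
    ← Finset.sum_sub_distrib]
  calc |∑ c, (log (n.choose (N c)) - n * binEntropy (N c / n))|
      ≤ ∑ c, |log (n.choose (N c)) - n * binEntropy (N c / n)| := Finset.abs_sum_le_sum_abs _ _
    _ ≤ ∑ _c : κ, n * (2 * countingError n) :=
        Finset.sum_le_sum fun c _ => abs_log_choose_sub_le hn (hN c)
    _ = n * Fintype.card κ * (2 * countingError n) := by
        rw [Finset.sum_const, Finset.card_univ, nsmul_eq_mul]
        ring

lemma log_card_image_fiberCount_le
    (hf : ∀ c, (Finset.univ.filter fun p => f p = c).card = n) (hn : n ≠ 0)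
    {A : Finset (α → Bool)} (hA : A.Nonempty) :
    log (A.image (fiberCount f)).card ≤ n * Fintype.card κ * countingError n := by
  have hcard : (A.image (fiberCount f)).card ≤ (n + 1) ^ Fintype.card κ := by
    calc (A.image (fiberCount f)).card
        ≤ (Fintype.piFinset fun _ : κ => Finset.range (n + 1)).card :=
          Finset.card_le_card <| Finset.image_subset_iff.2 fun s _ =>
            Fintype.mem_piFinset.2 fun c => Finset.mem_range_succ_iff.2 (fiberCount_le hf s c)
      _ = (n + 1) ^ Fintype.card κ := by simp
  have hpos : 0 < (A.image (fiberCount f)).card := (hA.image _).card_pos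
  have hn' : (1 : ℝ) ≤ n := by exact_mod_cast Nat.one_le_iff_ne_zero.2 hn
  have hlog : log ((n + 1 : ℕ) : ℝ) ≤ 1 + log n := by
    calc log ((n + 1 : ℕ) : ℝ) ≤ log (exp 1 * n) := by
          refine log_le_log (by positivity) ?_
          push_cast
          nlinarith [add_one_le_exp (1 : ℝ)]
      _ = 1 + log n := by rw [log_mul (exp_ne_zero 1) (by positivity), log_exp]
  calc log (A.image (fiberCount f)).card
      ≤ log (((n + 1) ^ Fintype.card κ : ℕ) : ℝ) :=
        log_le_log (Nat.cast_pos.2 hpos) (Nat.cast_le.2 hcard)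
    _ = Fintype.card κ * log ((n + 1 : ℕ) : ℝ) := by rw [Nat.cast_pow, log_pow]
    _ ≤ Fintype.card κ * (1 + log n) := by gcongr
    _ = n * Fintype.card κ * countingError n := by rw [← mul_countingError hn]; ring

end UniformFibers

end Combinatorics

section Laplace

variable {S T : Type*} [Fintype S] [DecidableEq T] {N : S → T} {w F : S → ℝ} {A B : Finset S}
  {G E : ℝ}

lemma mul_log_sum_add_inf'_le (hw : ∀ s, 0 < w s) (hG : 0 < G)
    (hfib : ∀ s₀ ∈ A, G * log (∑ s with N s = N s₀, w s) + F s₀ ≤ E) (hA : A.Nonempty)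
    (hB : ∀ s, s ∈ B ↔ ∃ s₀ ∈ A, N s = N s₀) :
    G * log (∑ s ∈ B, w s) + A.inf' hA F ≤ E + G * log (A.image N).card := by
  have hclass {t : T} (ht : t ∈ A.image N) :
      ∑ s ∈ B with N s = t, w s ≤ exp ((E - A.inf' hA F) / G) := by
    obtain ⟨s₀, hs₀, rfl⟩ := Finset.mem_image.1 ht
    have hpos : 0 < ∑ s with N s = N s₀, w s := Finset.sum_pos (fun s _ => hw s) ⟨s₀, by simp⟩
    calc ∑ s ∈ B with N s = N s₀, w s
        ≤ ∑ s with N s = N s₀, w s :=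
          Finset.sum_le_sum_of_subset_of_nonneg (Finset.filter_subset_filter _ B.subset_univ)
            fun s _ _ => (hw s).le
      _ ≤ exp ((E - A.inf' hA F) / G) := by
          rw [← log_le_iff_le_exp hpos, le_div_iff₀' hG]
          linarith [hfib s₀ hs₀, Finset.inf'_le F hs₀]
  have ⟨s₁, hs₁⟩ := hA
  have hB_pos : 0 < ∑ s ∈ B, w s :=
    Finset.sum_pos (fun s _ => hw s) ⟨s₁, (hB s₁).2 ⟨s₁, hs₁, rfl⟩⟩
  have hcard : (0 : ℝ) < (A.image N).card :=
    Nat.cast_pos.2 (Finset.card_pos.2 ⟨N s₁, Finset.mem_image_of_mem N hs₁⟩)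
  have hsum : ∑ s ∈ B, w s ≤ (A.image N).card * exp ((E - A.inf' hA F) / G) := by
    rw [← Finset.sum_fiberwise_of_maps_to (t := A.image N) (g := N) fun s hs => by
      obtain ⟨s₀, hs₀, h⟩ := (hB s).1 hs
      exact Finset.mem_image.2 ⟨s₀, hs₀, h.symm⟩]
    simpa only [nsmul_eq_mul] using Finset.sum_le_card_nsmul _ _ _ fun t => hclass
  have hlog := mul_le_mul_of_nonneg_left (log_le_log hB_pos hsum) hG.le
  rw [log_mul hcard.ne' (exp_ne_zero _), log_exp, mul_add, mul_div_cancel₀ _ hG.ne'] at hlog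
  linarith

lemma le_mul_log_sum_add_inf' (hw : ∀ s, 0 < w s) (hG : 0 < G)
    (hfib : ∀ s₀ ∈ A, E ≤ G * log (∑ s with N s = N s₀, w s) + F s₀) (hA : A.Nonempty)
    (hB : ∀ s, s ∈ B ↔ ∃ s₀ ∈ A, N s = N s₀) :
    E ≤ G * log (∑ s ∈ B, w s) + A.inf' hA F := by
  obtain ⟨s₁, hs₁, hmin⟩ := Finset.exists_mem_eq_inf' hA F
  rw [hmin]
  refine (hfib s₁ hs₁).trans ?_
  gcongr G * log ?_ + _
  · exact Finset.sum_pos (fun s _ => hw s) ⟨s₁, by simp⟩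
  · refine Finset.sum_le_sum_of_subset_of_nonneg (fun s hs => (hB s).2 ⟨s₁, hs₁, ?_⟩)
      fun s _ _ => (hw s).le
    simpa using hs

-- Among finitely many classes, the one with the smallest `F` dominates the sum, up to the
-- logarithm of the number of classes.
lemma abs_mul_log_sum_add_inf'_le (hw : ∀ s, 0 < w s) (hG : 0 < G)
    (hfib : ∀ s₀ ∈ A, |G * log (∑ s with N s = N s₀, w s) + F s₀| ≤ E) (hA : A.Nonempty)
    (hB : ∀ s, s ∈ B ↔ ∃ s₀ ∈ A, N s = N s₀) :
    |G * log (∑ s ∈ B, w s) + A.inf' hA F| ≤ E + G * log (A.image N).card := by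
  have hlow := le_mul_log_sum_add_inf' hw hG (fun s₀ h => (abs_le.1 (hfib s₀ h)).1) hA hB
  have hupp := mul_log_sum_add_inf'_le hw hG (fun s₀ h => (abs_le.1 (hfib s₀ h)).2) hA hB
  have hlog := mul_nonneg hG.le (log_natCast_nonneg (A.image N).card)
  exact abs_le.2 ⟨by linarith, hupp⟩

end Laplace

section OccupationNumbers

variable {d L k ℓ : ℕ}

lemma sum_spin {ι : Type*} (t : Finset ι) (s : ι → Bool) :
    ∑ p ∈ t, spin (s p) = 2 * (t.filter fun p => s p = true).card - t.card := by
  have hspin (b : Bool) : spin b = 2 * (if b = true then 1 else 0) - 1 := by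
    cases b <;> norm_num [spin]
  simp_rw [hspin, Finset.sum_sub_distrib, ← Finset.mul_sum, Finset.sum_boole, Finset.sum_const,
    nsmul_eq_mul, mul_one]

/-- The number of occupied sites of `s` in each cube of side `2^{-ℓ}`. -/
noncomputable abbrev cellCount [Fact ((0 : ℝ) < L)] (ℓ : ℕ) (s : ConfigSpace d L k) :
    Site d L ℓ → ℕ :=
  fiberCount (coarseSite ℓ) s

variable [Fact ((0 : ℝ) < L)]

lemma sum_cellCount (s : ConfigSpace d L k) : ∑ c, cellCount ℓ s c = numOnes L k s :=
  sum_fiberCount (coarseSite ℓ) s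

lemma integral_stepFun (s : ConfigSpace d L k) :
    ∫ x, stepFun L k s x = 2 * (gam k ^ d * numOnes L k s) - (L : ℝ) ^ d := by
  refine (integral_comp_siteOf k fun p => spin (s p)).trans ?_
  rw [sum_spin, Finset.card_univ, mul_sub, gam_pow_mul_card_site, numOnes, mul_left_comm]

lemma cellAvg_stepFun (h : ℓ ≤ k) (s : ConfigSpace d L k) (c : Site d L ℓ) :
    cellAvg ℓ (stepFun L k s) c = 2 * (cellCount ℓ s c / sitesPerCell d k ℓ) - 1 := by
  have hn : (sitesPerCell d k ℓ : ℝ) ≠ 0 := Nat.cast_ne_zero.2 (sitesPerCell_pos d k ℓ).ne'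
  have hint := setIntegral_cell_comp_siteOf h (fun p => spin (s p)) c
  rw [sum_spin, card_filter_coarseSite_eq h, Finset.filter_filter] at hint
  rw [cellAvg, gam_pow_eq_mul_sitesPerCell d h]
  refine (congrArg (· / (gam k ^ d * sitesPerCell d k ℓ)) hint).trans ?_
  rw [mul_div_mul_left _ _ (pow_pos (gam_pos k) d).ne', sub_div, div_self hn, mul_div_assoc]
  rfl

lemma coarse_stepFun_eq_iff (h : ℓ ≤ k) {s s' : ConfigSpace d L k} :
    coarse L ℓ (stepFun L k s) = coarse L ℓ (stepFun L k s')
      ↔ cellCount ℓ s = cellCount ℓ s' := by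
  have hn : (sitesPerCell d k ℓ : ℝ) ≠ 0 := Nat.cast_ne_zero.2 (sitesPerCell_pos d k ℓ).ne'
  rw [coarse_eq_coarse_iff]
  simp only [funext_iff, cellAvg_stepFun h, sub_left_inj,
    mul_right_inj' (two_ne_zero' ℝ), div_left_inj' hn, Nat.cast_inj]

lemma integral_ient_coarse_stepFun (h : ℓ ≤ k) (s : ConfigSpace d L k) :
    ∫ x, ient (coarse L ℓ (stepFun L k s) x)
      = -(gam k ^ d * (sitesPerCell d k ℓ
          * ∑ c, binEntropy (cellCount ℓ s c / sitesPerCell d k ℓ))) := by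
  simp_rw [integral_ient_coarse, cellAvg_stepFun h, ient_two_mul_sub_one,
    gam_pow_eq_mul_sitesPerCell d h, Finset.sum_neg_distrib, mul_neg, mul_assoc]

lemma gam_pow_mul_sitesPerCell_mul_card (h : ℓ ≤ k) :
    gam k ^ d * (sitesPerCell d k ℓ * Fintype.card (Site d L ℓ)) = (L : ℝ) ^ d := by
  rw [← mul_assoc, ← gam_pow_eq_mul_sitesPerCell d h, gam_pow_mul_card_site]

lemma mean_eq_iff {Np : ℕ} {m : ℝ} (hm : m = 2 * (Np : ℝ) / (2 ^ (d * k) * (L : ℝ) ^ d) - 1)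
    {σ : Torus d L → ℝ} :
    (L : ℝ) ^ (-(d : ℤ)) * ∫ r, σ r = m ↔ ∫ r, σ r = 2 * (gam k ^ d * Np) - (L : ℝ) ^ d := by
  have hL : (0 : ℝ) < (L : ℝ) ^ d := pow_pos Fact.out d
  have hm' : m = ((L : ℝ) ^ d)⁻¹ * (2 * (gam k ^ d * Np) - (L : ℝ) ^ d) := by
    rw [hm, gam_eq_inv, inv_pow, ← pow_mul, mul_comm k d]
    field_simp
  rw [zpow_neg, zpow_natCast, hm', mul_right_inj' (inv_ne_zero hL.ne')]

lemma numOnes_eq_iff {Np : ℕ} {s : ConfigSpace d L k} :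
    numOnes L k s = Np
      ↔ ∫ x, coarse L ℓ (stepFun L k s) x = 2 * (gam k ^ d * Np) - (L : ℝ) ^ d := by
  rw [integral_coarse ℓ (isProfile_stepFun s).integrable, integral_stepFun, sub_left_inj,
    mul_right_inj' two_ne_zero, mul_right_inj' (pow_pos (gam_pos k) d).ne', Nat.cast_inj]

end OccupationNumbers

section FreeEnergy

variable {d L k ℓ : ℕ} [Fact ((0 : ℝ) < L)] {β : ℝ} {J : ℝ → ℝ} {K R : NNReal}

lemma mul_GPL (hβ : β ≠ 0) (σ : Torus d L → ℝ) :
    β * GPL d L β J σ = (∫ x, ient (σ x)) - β / 2 * pairEnergy (kac J) σ := by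
  have hGPL : GPL d L β J σ = 1 / β * (∫ x, ient (σ x)) - 1 / 2 * pairEnergy (kac J) σ := rfl
  rw [hGPL]
  field_simp

lemma abs_mul_log_sum_exp_sub_le {S : Type*} {t : Finset S} (ht : t.Nonempty) {h : S → ℝ}
    {G a e : ℝ} (hG : 0 < G) (hh : ∀ s ∈ t, |G * h s - a| ≤ e) :
    |G * log (∑ s ∈ t, exp (h s)) - (G * log t.card + a)| ≤ e := by
  have hcard : (0 : ℝ) < t.card := Nat.cast_pos.2 ht.card_pos
  have hlog (b : ℝ) : G * log (t.card * exp (b / G)) = G * log t.card + b := by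
    rw [log_mul hcard.ne' (exp_ne_zero _), log_exp, mul_add, mul_div_cancel₀ _ hG.ne']
  have hupp : ∑ s ∈ t, exp (h s) ≤ t.card * exp ((a + e) / G) := by
    rw [← nsmul_eq_mul]
    refine Finset.sum_le_card_nsmul _ _ _ fun s hs => exp_le_exp.2 ((le_div_iff₀' hG).2 ?_)
    linarith [(abs_le.1 (hh s hs)).2]
  have hlow : t.card * exp ((a - e) / G) ≤ ∑ s ∈ t, exp (h s) := by
    rw [← nsmul_eq_mul]
    refine Finset.card_nsmul_le_sum _ _ _ fun s hs => exp_le_exp.2 ((div_le_iff₀' hG).2 ?_)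
    linarith [(abs_le.1 (hh s hs)).1]
  have hupp' := mul_le_mul_of_nonneg_left
    (log_le_log (Finset.sum_pos (fun s _ => exp_pos _) ht) hupp) hG.le
  have hlow' := mul_le_mul_of_nonneg_left (log_le_log (by positivity) hlow) hG.le
  rw [hlog] at hupp' hlow'
  exact abs_le.2 ⟨by linarith, by linarith⟩

-- All configurations with the same occupation numbers have almost the same energy, and their
-- number is the exponential of the entropy.
lemma abs_mul_log_classWeight_add_le (hβ : 0 < β) (hJ : LipschitzOnWith K J (Set.Ici 0))
    (hR : ∀ r, (R : ℝ) < r → J r = 0) (h : ℓ ≤ k) (s₀ : ConfigSpace d L k) :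
    |gam k ^ d * log (∑ s with cellCount ℓ s = cellCount ℓ s₀, exp (-β * Ham L k J s))
        + β * GPL d L β J (coarse L ℓ (stepFun L k s₀))|
      ≤ (L : ℝ) ^ d * (2 * β * meshConst d K R * gam ℓ
          + 2 * countingError (sitesPerCell d k ℓ)) := by
  set E := pairEnergy (kac J) (coarse L ℓ (stepFun L k s₀)) with hE
  set t := Finset.univ.filter fun s : ConfigSpace d L k => cellCount ℓ s = cellCount ℓ s₀
  have hn := (sitesPerCell_pos d k ℓ).ne'
  have hG : 0 < gam k ^ d := pow_pos (gam_pos k) d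
  have henergy (s) (hs : s ∈ t) : |gam k ^ d * (-β * Ham L k J s) - β / 2 * E|
      ≤ 2 * β * meshConst d K R * (L : ℝ) ^ d * gam ℓ := by
    rw [hE, ← (coarse_stepFun_eq_iff h).2 (Finset.mem_filter.1 hs).2]
    have hham := mul_le_mul_of_nonneg_left (abs_gam_pow_mul_ham_add_le hJ hR h s) hβ.le
    rw [← abs_of_pos hβ, ← abs_mul, abs_of_pos hβ, ← abs_neg] at hham
    ring_nf at hham ⊢
    exact hham
  have hsum := abs_mul_log_sum_exp_sub_le ⟨s₀, by simp [t]⟩ hG henergy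
  have hcount := mul_le_mul_of_nonneg_left (abs_log_card_filter_fiberCount_sub_le
    (card_filter_coarseSite_eq h) hn (fiberCount_le (card_filter_coarseSite_eq h) s₀)) hG.le
  rw [← abs_of_pos hG, ← abs_mul, abs_of_pos hG, mul_sub, ← mul_assoc _ _ (2 * _),
    gam_pow_mul_sitesPerCell_mul_card h] at hcount
  rw [mul_GPL hβ.ne', integral_ient_coarse_stepFun h]
  rw [abs_le] at *
  constructor <;> linarith

end FreeEnergy

section Rounding

variable {d L k ℓ : ℕ} [Fact ((0 : ℝ) < L)] {β : ℝ} {J : ℝ → ℝ} {K R : NNReal}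
  {σ : Torus d L → ℝ}

lemma integral_ient_coarse_le (n : ℕ) (hσ : IsProfile σ) :
    ∫ x, ient (coarse L n σ x) ≤ ∫ x, ient (σ x) := by
  rw [integral_ient_coarse, integral_eq_sum_cellAvg n hσ.integrable_ient]
  have := gam_pos n
  gcongr with c
  exact ient_cellAvg_le hσ n c

lemma mul_GPL_coarse_le (hβ : 0 < β) (hJ : LipschitzOnWith K J (Set.Ici 0))
    (hR : ∀ r, (R : ℝ) < r → J r = 0) (n : ℕ) (hσ : IsProfile σ) :
    β * GPL d L β J (coarse L n σ)
      ≤ β * GPL d L β J σ + (L : ℝ) ^ d * (β * meshConst d K R * gam n) := by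
  have henergy := mul_le_mul_of_nonneg_left
    (abs_le.1 (abs_pairEnergy_coarse_sub_le hJ hR n hσ)).1 (half_pos hβ).le
  rw [mul_GPL hβ.ne', mul_GPL hβ.ne']
  linarith [integral_ient_coarse_le n hσ]

-- The occupation numbers are rounded up or down so that they still add up to `Np`.
lemma exists_numOnes_eq_abs_cellCount_sub_le (h : ℓ ≤ k) {Np : ℕ} (hσ : IsProfile σ)
    (hmean : ∫ x, σ x = 2 * (gam k ^ d * Np) - (L : ℝ) ^ d) :
    ∃ s : ConfigSpace d L k, numOnes L k s = Np ∧ ∀ c,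
      |(cellCount ℓ s c : ℝ) - sitesPerCell d k ℓ * ((1 + cellAvg ℓ σ c) / 2)| ≤ 1 := by
  set n := sitesPerCell d k ℓ with hn
  set f : Site d L ℓ → ℝ := fun c => n * ((1 + cellAvg ℓ σ c) / 2) with hf
  have hf_nonneg (c) : 0 ≤ f c :=
    mul_nonneg n.cast_nonneg (by linarith [(cellAvg_mem_Icc hσ ℓ c).1])
  have hf_le (c) : f c ≤ n :=
    mul_le_of_le_one_right n.cast_nonneg (by linarith [(cellAvg_mem_Icc hσ ℓ c).2])
  have hf_sum : ∑ c, f c = Np := by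
    have hG : gam k ^ d ≠ 0 := (pow_pos (gam_pos k) d).ne'
    have hcard := gam_pow_mul_sitesPerCell_mul_card (d := d) (L := L) h
    have hint := integral_eq_sum_cellAvg ℓ hσ.integrable
    rw [gam_pow_eq_mul_sitesPerCell d h, ← hn, hmean] at hint
    refine mul_left_cancel₀ hG ?_
    simp only [hf, ← Finset.mul_sum, ← Finset.sum_div, Finset.sum_add_distrib,
      Finset.sum_const, Finset.card_univ, nsmul_eq_mul, mul_one]
    linarith
  obtain ⟨g, hg, hg_sum⟩ := exists_sum_eq_floor_sum hf_nonneg Finset.univ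
  rw [hf_sum, Nat.floor_natCast] at hg_sum
  have hg_le (c) : g c ≤ n := (hg c (Finset.mem_univ c)).2.trans (Nat.ceil_le.2 (hf_le c))
  obtain ⟨s, hs⟩ := exists_fiberCount_eq (card_filter_coarseSite_eq h) hg_le
  refine ⟨s, ?_, fun c => ?_⟩
  · rw [← sum_cellCount (ℓ := ℓ), cellCount, hs, hg_sum]
  · rw [cellCount, hs]
    exact abs_natCast_sub_le_one (hg c (Finset.mem_univ c)) (hf_nonneg c)

lemma integral_ient_coarse_stepFun_le (h : ℓ ≤ k) (hσ : IsProfile σ) {s : ConfigSpace d L k}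
    (hs : ∀ c, |(cellCount ℓ s c : ℝ) - sitesPerCell d k ℓ * ((1 + cellAvg ℓ σ c) / 2)| ≤ 1) :
    ∫ x, ient (coarse L ℓ (stepFun L k s) x) ≤ (∫ x, ient (coarse L ℓ σ x))
      + (L : ℝ) ^ d * (2 * countingError (sitesPerCell d k ℓ)) := by
  have hcell (c) : ient (cellAvg ℓ (stepFun L k s) c)
      ≤ ient (cellAvg ℓ σ c) + 2 * countingError (sitesPerCell d k ℓ) := by
    have hmem := cellAvg_mem_Icc hσ ℓ c
    rw [cellAvg_stepFun h, ient_two_mul_sub_one, ient_eq_neg_binEntropy]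
    linarith [binEntropy_le_add_countingError (sitesPerCell_pos d k ℓ).ne'
      (fiberCount_le (card_filter_coarseSite_eq h) s c)
      ⟨by linarith [hmem.1], by linarith [hmem.2]⟩ (hs c)]
  rw [integral_ient_coarse, integral_ient_coarse, ← gam_pow_mul_card_site ℓ, mul_assoc,
    ← mul_add]
  refine mul_le_mul_of_nonneg_left ?_ (pow_pos (gam_pos ℓ) d).le
  refine (Finset.sum_le_sum fun c _ => hcell c).trans_eq ?_
  rw [Finset.sum_add_distrib, Finset.sum_const, Finset.card_univ, nsmul_eq_mul]

lemma abs_coarse_stepFun_sub_coarse_le (h : ℓ ≤ k) {s : ConfigSpace d L k}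
    (hs : ∀ c, |(cellCount ℓ s c : ℝ) - sitesPerCell d k ℓ * ((1 + cellAvg ℓ σ c) / 2)| ≤ 1)
    (x : Torus d L) :
    |coarse L ℓ (stepFun L k s) x - coarse L ℓ σ x|
      ≤ 2 * countingError (sitesPerCell d k ℓ) := by
  have hn : (0 : ℝ) < sitesPerCell d k ℓ := Nat.cast_pos.2 (sitesPerCell_pos d k ℓ)
  have hinv : 1 / (sitesPerCell d k ℓ : ℝ) ≤ countingError (sitesPerCell d k ℓ) := by
    rw [countingError]
    gcongr
    linarith [log_natCast_nonneg (sitesPerCell d k ℓ)]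
  have hcell := div_le_div_of_nonneg_right (hs (siteOf L ℓ x)) hn.le
  rw [← abs_of_pos hn, ← abs_div, abs_of_pos hn, sub_div, mul_div_cancel_left₀ _ hn.ne'] at hcell
  rw [coarse_apply, coarse_apply, cellAvg_stepFun h]
  refine le_trans ?_ (mul_le_mul_of_nonneg_left hinv zero_le_two)
  rw [abs_le] at hcell ⊢
  constructor <;> linarith

lemma exists_numOnes_eq_mul_GPL_coarse_le (hβ : 0 < β) (hJ : LipschitzOnWith K J (Set.Ici 0))
    (hR : ∀ r, (R : ℝ) < r → J r = 0) (h : ℓ ≤ k) {Np : ℕ} (hσ : IsProfile σ)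
    (hmean : ∫ x, σ x = 2 * (gam k ^ d * Np) - (L : ℝ) ^ d) :
    ∃ s : ConfigSpace d L k, numOnes L k s = Np ∧
      β * GPL d L β J (coarse L ℓ (stepFun L k s)) ≤ β * GPL d L β J σ
        + (L : ℝ) ^ d * (β * meshConst d K R * gam ℓ
          + (2 + β * supConst d K R) * countingError (sitesPerCell d k ℓ)) := by
  obtain ⟨s, hs_ones, hs⟩ := exists_numOnes_eq_abs_cellCount_sub_le h hσ hmean
  have hentropy := integral_ient_coarse_stepFun_le h hσ hs
  have henergy := mul_le_mul_of_nonneg_left (abs_le.1 (abs_pairEnergy_kac_sub_le hJ hR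
    ((isProfile_stepFun s).coarse ℓ) (hσ.coarse ℓ) (mul_nonneg zero_le_two
      (countingError_nonneg _)) (abs_coarse_stepFun_sub_coarse_le h hs))).1 (half_pos hβ).le
  have hcoarse := mul_GPL_coarse_le hβ hJ hR ℓ hσ
  rw [mul_GPL hβ.ne' (coarse L ℓ σ)] at hcoarse
  refine ⟨s, hs_ones, ?_⟩
  rw [mul_GPL hβ.ne' (coarse L ℓ (stepFun L k s))]
  linarith

end Rounding

section LargeDeviations

variable {d L k : ℕ}

lemma log_Pcan (β : ℝ) (J : ℝ → ℝ) {Np : ℕ} {E : Set (ConfigSpace d L k)}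
    {B : Finset (ConfigSpace d L k)} (hB : ∀ s, s ∈ B ↔ s ∈ E ∧ numOnes L k s = Np)
    (hne : B.Nonempty) :
    log (Pcan L k β J Np E) = log (∑ s ∈ B, exp (-β * Ham L k J s))
      - log (∑ s : ConfigSpace d L k with numOnes L k s = Np, exp (-β * Ham L k J s)) := by
  have hnum : 0 < ∑ s ∈ B, exp (-β * Ham L k J s) := Finset.sum_pos (fun _ _ => exp_pos _) hne
  have hden : 0 < ∑ s : ConfigSpace d L k with numOnes L k s = Np, exp (-β * Ham L k J s) := by
    obtain ⟨s, hs⟩ := hne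
    exact Finset.sum_pos (fun _ _ => exp_pos _) ⟨s, by simp [((hB s).1 hs).2]⟩
  have hfilter : (Finset.univ.filter fun s => s ∈ E ∧ numOnes L k s = Np) = B := by
    ext s
    simp [hB]
  rw [Pcan, hfilter, log_div hnum.ne' hden.ne']

variable {ℓ : ℕ} [Fact ((0 : ℝ) < L)] {β : ℝ} {J : ℝ → ℝ} {K R : NNReal}

lemma abs_mul_log_unionWeight_add_inf'_le (hβ : 0 < β) (hJ : LipschitzOnWith K J (Set.Ici 0))
    (hR : ∀ r, (R : ℝ) < r → J r = 0) (h : ℓ ≤ k) {A B : Finset (ConfigSpace d L k)}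
    (hA : A.Nonempty) (hB : ∀ s, s ∈ B ↔ ∃ s₀ ∈ A, cellCount ℓ s = cellCount ℓ s₀) :
    |gam k ^ d * log (∑ s ∈ B, exp (-β * Ham L k J s))
        + A.inf' hA fun s₀ => β * GPL d L β J (coarse L ℓ (stepFun L k s₀))|
      ≤ (L : ℝ) ^ d * (2 * β * meshConst d K R * gam ℓ
          + 3 * countingError (sitesPerCell d k ℓ)) := by
  have hG : 0 < gam k ^ d := pow_pos (gam_pos k) d
  have hclasses := mul_le_mul_of_nonneg_left (log_card_image_fiberCount_le
    (card_filter_coarseSite_eq h) (sitesPerCell_pos d k ℓ).ne' hA) hG.le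
  rw [← mul_assoc, gam_pow_mul_sitesPerCell_mul_card h] at hclasses
  refine (abs_mul_log_sum_add_inf'_le (fun _ => exp_pos _) hG
    (fun s₀ _ => abs_mul_log_classWeight_add_le hβ hJ hR h s₀) hA hB).trans ?_
  linarith

lemma abs_mul_log_partition_add_le (hβ : 0 < β) (hJ : LipschitzOnWith K J (Set.Ici 0))
    (hR : ∀ r, (R : ℝ) < r → J r = 0) (h : ℓ ≤ k) {Np : ℕ} {σs : Torus d L → ℝ}
    (hσs : IsProfile σs) (hmean : ∫ x, σs x = 2 * (gam k ^ d * Np) - (L : ℝ) ^ d)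
    (hmin : ∀ σ, IsProfile σ → ∫ x, σ x = 2 * (gam k ^ d * Np) - (L : ℝ) ^ d →
      GPL d L β J σs ≤ GPL d L β J σ) :
    |gam k ^ d * log (∑ s : ConfigSpace d L k with numOnes L k s = Np, exp (-β * Ham L k J s))
        + β * GPL d L β J σs|
      ≤ (L : ℝ) ^ d * (3 * β * meshConst d K R * gam ℓ
          + (5 + β * supConst d K R) * countingError (sitesPerCell d k ℓ)) := by
  set B := Finset.univ.filter fun s : ConfigSpace d L k => numOnes L k s = Np with hB
  obtain ⟨s₁, hs₁, hs₁_le⟩ := exists_numOnes_eq_mul_GPL_coarse_le hβ hJ hR h hσs hmean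
  have hs₁_mem : s₁ ∈ B := by simp [hB, hs₁]
  have hclosed (s) : s ∈ B ↔ ∃ s₀ ∈ B, cellCount ℓ s = cellCount ℓ s₀ := by
    refine ⟨fun hs => ⟨s, hs, rfl⟩, fun ⟨s₀, hs₀, hs⟩ => ?_⟩
    refine Finset.mem_filter.2 ⟨Finset.mem_univ s, ?_⟩
    rw [← sum_cellCount, hs, sum_cellCount, (Finset.mem_filter.1 hs₀).2]
  have hlow : β * GPL d L β J σs
      ≤ B.inf' ⟨s₁, hs₁_mem⟩ fun s => β * GPL d L β J (coarse L ℓ (stepFun L k s)) :=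
    Finset.le_inf' _ _ fun s hs => mul_le_mul_of_nonneg_left
      (hmin _ ((isProfile_stepFun s).coarse ℓ)
        (numOnes_eq_iff.1 (Finset.mem_filter.1 hs).2)) hβ.le
  have hupp := (Finset.inf'_le (fun s => β * GPL d L β J (coarse L ℓ (stepFun L k s)))
    hs₁_mem).trans hs₁_le
  have hunion := abs_mul_log_unionWeight_add_inf'_le hβ hJ hR h ⟨s₁, hs₁_mem⟩ hclosed
  have hρ := countingError_nonneg (sitesPerCell d k ℓ)
  have hslack : 0 ≤ (L : ℝ) ^ d * (β * meshConst d K R * gam ℓ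
      + (2 + β * supConst d K R) * countingError (sitesPerCell d k ℓ)) := by
    have := gam_pos ℓ
    have := meshConst_nonneg d K R
    have := supConst_nonneg d K R
    positivity
  rw [abs_le] at hunion ⊢
  constructor <;> linarith

lemma abs_mul_log_Pcan_add_inf'_le (hβ : 0 < β) (hJ : LipschitzOnWith K J (Set.Ici 0))
    (hR : ∀ r, (R : ℝ) < r → J r = 0) (h : ℓ ≤ k) {Np : ℕ} {σs : Torus d L → ℝ}
    (hσs : IsProfile σs) (hmean : ∫ x, σs x = 2 * (gam k ^ d * Np) - (L : ℝ) ^ d)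
    (hmin : ∀ σ, IsProfile σ → ∫ x, σ x = 2 * (gam k ^ d * Np) - (L : ℝ) ^ d →
      GPL d L β J σs ≤ GPL d L β J σ)
    {A : Finset (ConfigSpace d L k)} (hA : A.Nonempty) (hA_ones : ∀ s₀ ∈ A, numOnes L k s₀ = Np) :
    |gam k ^ d * log (Pcan L k β J Np
          {s | ∃ s₀ ∈ A, coarse L ℓ (stepFun L k s) = coarse L ℓ (stepFun L k s₀)})
        + A.inf' hA fun s₀ => β * (GPL d L β J (coarse L ℓ (stepFun L k s₀)) - GPL d L β J σs)|
      ≤ (L : ℝ) ^ d * (5 * β * meshConst d K R * gam ℓ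
          + (8 + β * supConst d K R) * countingError (sitesPerCell d k ℓ)) := by
  set B := Finset.univ.filter fun s : ConfigSpace d L k =>
    ∃ s₀ ∈ A, cellCount ℓ s = cellCount ℓ s₀
  have hB (s) : s ∈ B ↔ ∃ s₀ ∈ A, cellCount ℓ s = cellCount ℓ s₀ := by simp [B]
  have hB_ones (s) : s ∈ B ↔
      s ∈ {s | ∃ s₀ ∈ A, coarse L ℓ (stepFun L k s) = coarse L ℓ (stepFun L k s₀)}
        ∧ numOnes L k s = Np := by
    simp only [hB, Set.mem_ofPred_eq, coarse_stepFun_eq_iff h, iff_self_and]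
    rintro ⟨s₀, hs₀, hs⟩
    rw [← sum_cellCount, hs, sum_cellCount, hA_ones s₀ hs₀]
  have hB_nonempty : B.Nonempty := hA.imp fun s hs => (hB s).2 ⟨s, hs, rfl⟩
  have hinf : (A.inf' hA fun s₀ =>
        β * (GPL d L β J (coarse L ℓ (stepFun L k s₀)) - GPL d L β J σs))
      = (A.inf' hA fun s₀ => β * GPL d L β J (coarse L ℓ (stepFun L k s₀)))
        - β * GPL d L β J σs := by
    simp_rw [mul_sub]
    exact (map_finset_inf' (OrderIso.subRight (β * GPL d L β J σs)) hA _).symm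
  have hunion := abs_mul_log_unionWeight_add_inf'_le hβ hJ hR h hA hB
  have hpartition := abs_mul_log_partition_add_le hβ hJ hR h hσs hmean hmin
  rw [log_Pcan β J hB_ones hB_nonempty, mul_sub, hinf]
  rw [abs_le] at hunion hpartition ⊢
  constructor <;> linarith

end LargeDeviations

section MeshSizes

variable {d k ℓ : ℕ}

lemma log_one_div_gam (k : ℕ) : log (1 / gam k) = k * log 2 := by
  rw [gam_eq_inv, one_div, inv_inv, log_pow]

lemma gam_rpow_div (hk : k ≠ 0) : gam k ^ ((ℓ : ℝ) / k) = gam ℓ := by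
  rw [gam_eq_inv, gam_eq_inv, inv_rpow (by positivity), ← rpow_natCast, ← rpow_mul zero_le_two,
    mul_div_cancel₀ _ (Nat.cast_ne_zero.2 hk), rpow_natCast]

lemma gam_rpow_mul_one_sub_div (hk : k ≠ 0) (h : ℓ ≤ k) :
    gam k ^ ((d : ℝ) * (1 - ℓ / k)) = 1 / sitesPerCell d k ℓ := by
  have hexp : (k : ℝ) * (d * (1 - ℓ / k)) = (d * (k - ℓ) : ℕ) := by
    push_cast [Nat.cast_sub h]
    field_simp
  rw [gam_eq_inv, inv_rpow (by positivity), ← rpow_natCast, ← rpow_mul zero_le_two, hexp,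
    rpow_natCast, one_div, sitesPerCell]
  push_cast
  rfl

lemma one_le_two_mul_log_one_div_gam (hk : k ≠ 0) : 1 ≤ 2 * log (1 / gam k) := by
  have hk' : (1 : ℝ) ≤ k := Nat.one_le_cast.2 (Nat.one_le_iff_ne_zero.2 hk)
  rw [log_one_div_gam]
  nlinarith [log_two_gt_d9]

lemma countingError_sitesPerCell_le (hk : k ≠ 0) :
    countingError (sitesPerCell d k ℓ) ≤ (d + 2) * log (1 / gam k) * (1 / sitesPerCell d k ℓ) := by
  have hlog : log (sitesPerCell d k ℓ) ≤ d * log (1 / gam k) := by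
    have hsub : ((k - ℓ : ℕ) : ℝ) ≤ k := Nat.cast_le.2 (Nat.sub_le k ℓ)
    have : 0 ≤ log 2 := log_nonneg one_le_two
    rw [log_one_div_gam, sitesPerCell, Nat.cast_pow, log_pow, Nat.cast_ofNat, ← mul_assoc]
    push_cast
    gcongr
  rw [countingError, ← mul_one_div]
  gcongr
  linarith [one_le_two_mul_log_one_div_gam hk]

end MeshSizes

theorem canonical_ld_family_general (d : ℕ) {β : ℝ} (hβ : 0 < β) {J : ℝ → ℝ} {K R : NNReal}
    (hJ : LipschitzOnWith K J (Set.Ici 0)) (hR : ∀ r, (R : ℝ) < r → J r = 0) :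
    ∃ c : ℝ, 0 < c ∧ ∀ (L k ℓ : ℕ) [Fact ((0 : ℝ) < L)], 1 ≤ k → ℓ ≤ k → ∀ (Np : ℕ) (m : ℝ),
      m = 2 * (Np : ℝ) / (2 ^ (d * k) * (L : ℝ) ^ d) - 1 →
      ∀ σs : Torus d L → ℝ, IsProfile σs → (L : ℝ) ^ (-(d : ℤ)) * ∫ r, σs r = m →
      (∀ σ : Torus d L → ℝ, IsProfile σ → (L : ℝ) ^ (-(d : ℤ)) * ∫ r, σ r = m →
        GPL d L β J σs ≤ GPL d L β J σ) →
      ∀ (A : Finset (ConfigSpace d L k)) (hA : A.Nonempty),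
      (∀ s₀ ∈ A, (L : ℝ) ^ (-(d : ℤ)) * ∫ r, coarse L ℓ (stepFun L k s₀) r = m) →
      |gam k ^ d * log (Pcan L k β J Np
            {s | ∃ s₀ ∈ A, coarse L ℓ (stepFun L k s) = coarse L ℓ (stepFun L k s₀)})
          + A.inf' hA fun s₀ => β * (GPL d L β J (coarse L ℓ (stepFun L k s₀)) - GPL d L β J σs)|
        ≤ c * (L : ℝ) ^ d * (gam k ^ ((ℓ : ℝ) / k) + gam k ^ ((d : ℝ) * (1 - ℓ / k)))
          * log (1 / gam k) := by
  have hC := meshConst_nonneg d K R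
  have hC' := supConst_nonneg d K R
  refine ⟨10 * β * meshConst d K R + (8 + β * supConst d K R) * (d + 2), by positivity,
    fun L k ℓ _ hk h Np m hm σs hσs hmean hmin A hA hA_mean => ?_⟩
  simp only [mean_eq_iff hm] at hmean hmin hA_mean
  have hk : k ≠ 0 := Nat.one_le_iff_ne_zero.1 hk
  have hlog := one_le_two_mul_log_one_div_gam hk
  have hlog_nonneg : 0 ≤ log (1 / gam k) := by linarith
  have hgam := gam_pos ℓ
  rw [gam_rpow_div hk, gam_rpow_mul_one_sub_div hk h]
  calc _ ≤ (L : ℝ) ^ d * (5 * β * meshConst d K R * gam ℓ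
          + (8 + β * supConst d K R) * countingError (sitesPerCell d k ℓ)) :=
        abs_mul_log_Pcan_add_inf'_le hβ hJ hR h hσs hmean hmin hA
          fun s₀ hs₀ => numOnes_eq_iff.2 (hA_mean s₀ hs₀)
    _ ≤ (L : ℝ) ^ d * (5 * β * meshConst d K R * gam ℓ * (2 * log (1 / gam k))
          + (8 + β * supConst d K R)
            * ((d + 2) * log (1 / gam k) * (1 / sitesPerCell d k ℓ))) := by
        refine mul_le_mul_of_nonneg_left (add_le_add
          (le_mul_of_one_le_right (by positivity) hlog)
          (mul_le_mul_of_nonneg_left (countingError_sitesPerCell_le hk) ?_)) ?_ <;> positivity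
    _ ≤ _ := by
        have hcross : 0 ≤ (L : ℝ) ^ d * log (1 / gam k)
            * (10 * β * meshConst d K R * (1 / sitesPerCell d k ℓ)
              + (8 + β * supConst d K R) * (d + 2) * gam ℓ) := by positivity
        linarith

/-- **Canonical large deviations for families of coarse-grained configurations**
(Theorem `propos1`, second part): let `m = 2N_p/(2^{dk}L^d) − 1` and let `σ*` be a Lipschitz
(constant `Λ`) constrained minimizer of `F` over measurable `σ : T_L → [−1,1]` with mean `m`.
There is a constant `c > 0`, depending only on `d`, `β`, `J` and `Λ`, such that for every
nonempty family `𝒜` of coarse-grained configurations with mean `m`,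
`| γ^d log P_{can,N_p}(∪_{σ_δ∈𝒜} E(σ_δ)) + inf_{σ∈𝒜} β (F(σ) − F(σ*)) | ≤
  c L^d (γ^δ + γ^{d(1−δ)}) log(1/γ)`, where `γ = 2^{−k}` and `δ = ℓ/k`. -/
theorem canonical_ld_family (d : ℕ) (hd : 1 ≤ d) (β : ℝ) (hβ : 1 < β)
    (J : ℝ → ℝ) (hJ : KacPotential d J) (Λ : ℝ) :
    ∃ c : ℝ, 0 < c ∧
      ∀ (L k ℓ : ℕ) [Fact ((0:ℝ) < L)], 2 ≤ L → 1 ≤ ℓ → ℓ < k →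
      ∀ Np : ℕ, Np ≤ 2 ^ (d * k) * L ^ d →
      ∀ m : ℝ, m = 2 * (Np:ℝ) / (2 ^ (d * k) * (L:ℝ) ^ d) - 1 →
      ∀ σs : Torus d L → ℝ, Measurable σs → (∀ x, σs x ∈ Set.Icc (-1:ℝ) 1) →
        ((L:ℝ) ^ (-(d:ℤ)) * ∫ r, σs r) = m →
        (∀ σ : Torus d L → ℝ, Measurable σ → (∀ x, σ x ∈ Set.Icc (-1:ℝ) 1) →
          ((L:ℝ) ^ (-(d:ℤ)) * ∫ r, σ r) = m → GPL d L β J σs ≤ GPL d L β J σ) →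
        (∀ x y, |σs x - σs y| ≤ Λ * torusDist x y) →
      ∀ (A : Finset (ConfigSpace d L k)) (hA : A.Nonempty),
        (∀ s₀ ∈ A, ((L:ℝ) ^ (-(d:ℤ)) * ∫ r, coarse L ℓ (stepFun L k s₀) r) = m) →
        |(gam k) ^ d *
              Real.log (Pcan L k β J Np
                {s | ∃ s₀ ∈ A, coarse L ℓ (stepFun L k s) = coarse L ℓ (stepFun L k s₀)})
            + A.inf' hA (fun s₀ =>
                β * (GPL d L β J (coarse L ℓ (stepFun L k s₀)) - GPL d L β J σs))|
          ≤ c * (L:ℝ) ^ d *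
              (gam k ^ ((ℓ:ℝ) / (k:ℝ)) + gam k ^ ((d:ℝ) * (1 - (ℓ:ℝ) / (k:ℝ)))) *
              Real.log (1 / gam k) := by
  obtain ⟨K, hK⟩ := hJ.exists_lipschitzOnWith
  obtain ⟨c, hc, hbound⟩ :=
    canonical_ld_family_general d (by linarith) hK (R := 1) (by simpa using hJ.support)
  exact ⟨c, hc, fun L k ℓ _ _ hℓ hℓk Np _ m hm σs hσs hσs_mem hmean hmin _ A hA hA_mean =>
    hbound L k ℓ (hℓ.trans hℓk.le) hℓk.le Np m hm σs ⟨hσs, hσs_mem⟩ hmean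
      (fun σ hσ => hmin σ hσ.measurable hσ.mem_Icc) A hA hA_mean⟩
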